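/- arXiv:1207.3516 — 5 statements merged into one kernel-verified Lean document; each statement's English description precedes it below -/
import Mathlib

section
/- Let m ≥ 0. The spectrum of the free discrete Dirac operator D_m = [[m, d],[d*, −m]] on ℓ²(ℤ,ℂ²) is exactly [−√(m²+4), −m] ∪ [m, √(m²+4)]. -/
/-!
The square of a Dirac operator is `m ^ 2 + Δ` with `Δ = 2 - S - S⁻¹` the discrete Laplacian, `S`
being the shift. Conjugating by the modulation `f n ↦ z ^ n • f n` turns `S` into `z⁻¹ • S`, so the
spectrum of `S`, a nonempty subset of the unit circle, is invariant under rotations and hence the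
whole circle; the spectrum of `Δ` is its image `[0, 4]` under `z ↦ 2 - (z + z⁻¹)`. Reflecting `ℤ`
while rotating the spinor components conjugates `D` to `-D`, so the spectrum of `D` is symmetric and
is determined by that of `D ^ 2`.
-/

open scoped ENNReal

section Algebra

lemma sq_mem_spectrum_sq_iff_of_spectrum_neg_eq {R A : Type*} [CommRing R] [Ring A] [Algebra R A]
    {a : A} (ha : spectrum R (-a) = spectrum R a) {r : R} :
    r ^ 2 ∈ spectrum R (a ^ 2) ↔ r ∈ spectrum R a := by
  have hcomm : Commute (algebraMap R A r - a) (algebraMap R A r + a) :=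
    have h : Commute (algebraMap R A r) a := Algebra.commutes r a
    ((Commute.refl _).add_right h).sub_left (h.symm.add_right (Commute.refl a))
  have hfactor : algebraMap R A (r ^ 2) - a ^ 2 =
      (algebraMap R A r - a) * (algebraMap R A r + a) := by
    rw [hcomm.eq, map_pow, Commute.sq_sub_sq (Algebra.commutes r a)]
  have hneg : r ∈ spectrum R a ↔ ¬IsUnit (algebraMap R A r + a) := by
    rw [← ha, spectrum.mem_iff, sub_neg_eq_add]
  rw [spectrum.mem_iff, hfactor, hcomm.isUnit_mul_iff, not_and_or, ← spectrum.mem_iff, ← hneg,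
    or_self]

variable {𝕜 A : Type*} [Field 𝕜] [Ring A] [Algebra 𝕜 A]

lemma add_inv_mem_spectrum_add_inv_iff (u : Aˣ) {z : 𝕜} (hz : z ≠ 0) :
    z + z⁻¹ ∈ spectrum 𝕜 (u + ↑u⁻¹ : A) ↔
      z ∈ spectrum 𝕜 (u : A) ∨ z⁻¹ ∈ spectrum 𝕜 (u : A) := by
  have hcomm : Commute (algebraMap 𝕜 A z - u) (algebraMap 𝕜 A z⁻¹ - u) :=
    ((Algebra.commute_algebraMap_left _ _).sub_right (Algebra.commute_algebraMap_left _ _)).sub_left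
      ((Algebra.commute_algebraMap_right _ _).sub_right (Commute.refl _))
  have hfactor : ↑(-u) * (algebraMap 𝕜 A (z + z⁻¹) - (u + ↑u⁻¹)) =
      (algebraMap 𝕜 A z - u) * (algebraMap 𝕜 A z⁻¹ - u) := by
    have hinv : algebraMap 𝕜 A z * algebraMap 𝕜 A z⁻¹ = 1 := by
      rw [← map_mul, mul_inv_cancel₀ hz, map_one]
    simp only [Units.val_neg, map_add, mul_sub, sub_mul, mul_add, neg_mul, Units.mul_inv, hinv,
      Algebra.commutes z (u : A)]
    abel
  rw [spectrum.mem_iff, ← Units.isUnit_units_mul (-u), hfactor, hcomm.isUnit_mul_iff, not_and_or,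
    spectrum.mem_iff, spectrum.mem_iff]

open Polynomial in
lemma exists_ne_zero_add_inv_eq [IsAlgClosed 𝕜] (w : 𝕜) : ∃ z : 𝕜, z ≠ 0 ∧ z + z⁻¹ = w := by
  obtain ⟨z, hz⟩ := IsAlgClosed.exists_root (X ^ 2 - C w * X + 1 : 𝕜[X])
    (by
      have hdeg : (X ^ 2 - C w * X + 1 : 𝕜[X]).degree = 2 := by compute_degree!
      simp [hdeg])
  have hroot : z ^ 2 - w * z + 1 = 0 := by simpa using hz
  have hz0 : z ≠ 0 := by
    rintro rfl
    simp at hroot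
  refine ⟨z, hz0, ?_⟩
  field_simp
  linear_combination hroot

lemma spectrum_unit_add_inv [IsAlgClosed 𝕜] (u : Aˣ) :
    spectrum 𝕜 (u + ↑u⁻¹ : A) = (fun z => z + z⁻¹) '' spectrum 𝕜 (u : A) := by
  ext w
  constructor
  · intro hw
    obtain ⟨z, hz, rfl⟩ := exists_ne_zero_add_inv_eq w
    rcases (add_inv_mem_spectrum_add_inv_iff u hz).mp hw with h | h
    · exact ⟨z, h, rfl⟩
    · exact ⟨z⁻¹, h, by simp only [inv_inv, add_comm]⟩
  · rintro ⟨z, hz, rfl⟩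
    exact (add_inv_mem_spectrum_add_inv_iff u (spectrum.ne_zero_of_mem_of_unit hz)).mpr (.inl hz)

end Algebra

section NormedAlgebra

lemma spectrum_subset_sphere_of_norm_le_one {𝕜 A : Type*} [NormedField 𝕜] [NormedRing A]
    [NormedAlgebra 𝕜 A] [CompleteSpace A] [NormOneClass A] {u : Aˣ} (hu : ‖(u : A)‖ ≤ 1)
    (hu_inv : ‖(↑u⁻¹ : A)‖ ≤ 1) : spectrum 𝕜 (u : A) ⊆ Metric.sphere 0 1 := by
  intro z hz
  have hz_inv : ‖z‖⁻¹ ≤ 1 := by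
    rw [← norm_inv]
    have hz_inv_mem : z⁻¹ ∈ spectrum 𝕜 (↑u⁻¹ : A) := spectrum.inv₀_mem_inv_iff.mpr hz
    exact (spectrum.norm_le_norm_of_mem hz_inv_mem).trans hu_inv
  have hz_pos : 0 < ‖z‖ := norm_pos_iff.mpr (spectrum.ne_zero_of_mem_of_unit hz)
  rw [mem_sphere_zero_iff_norm]
  exact le_antisymm ((spectrum.norm_le_norm_of_mem hz).trans hu) ((inv_le_one₀ hz_pos).mp hz_inv)

lemma spectrum_eq_sphere_of_spectrum_smul_eq {A : Type*} [NormedRing A] [NormedAlgebra ℂ A]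
    [CompleteSpace A] [Nontrivial A] {a : A} (ha : spectrum ℂ a ⊆ Metric.sphere 0 1)
    (hrot : ∀ w : Circle, spectrum ℂ ((w : ℂ) • a) = spectrum ℂ a) :
    spectrum ℂ a = Metric.sphere 0 1 := by
  refine ha.antisymm fun z hz => ?_
  obtain ⟨z₀, hz₀⟩ := spectrum.nonempty a
  let w : Circle := ⟨z, hz⟩ / ⟨z₀, ha hz₀⟩
  have hw : z = (w : ℂ) • z₀ := by
    have hz₀' : z₀ ≠ 0 := by
      rintro rfl
      simpa using ha hz₀
    exact (div_mul_cancel₀ z hz₀').symm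
  rw [hw, ← hrot w, spectrum.smul_eq_smul _ _ ⟨z₀, hz₀⟩]
  exact Set.smul_mem_smul_set hz₀

lemma spectrum_eq_of_intertwining {𝕜 V W : Type*} [NormedField 𝕜]
    [AddCommGroup V] [Module 𝕜 V] [TopologicalSpace V] [IsTopologicalAddGroup V]
    [ContinuousConstSMul 𝕜 V] [AddCommGroup W] [Module 𝕜 W] [TopologicalSpace W]
    [IsTopologicalAddGroup W] [ContinuousConstSMul 𝕜 W]
    {S : V →L[𝕜] V} {T : W →L[𝕜] W} (e : V ≃L[𝕜] W) (h : ∀ v, e (S v) = T (e v)) :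
    spectrum 𝕜 S = spectrum 𝕜 T := by
  have hT : e.conjContinuousAlgEquiv S = T := by
    ext w
    simp [h]
  rw [← hT, AlgEquiv.spectrum_eq]

end NormedAlgebra

section WeightedComposition

variable {ι ι' : Type*} {p : ℝ≥0∞}

lemma memℓp_of_norm_eq_comp {E : ι → Type*} {F : ι' → Type*} [∀ i, NormedAddCommGroup (E i)]
    [∀ i, NormedAddCommGroup (F i)] {f : ∀ i, E i} {g : ∀ i, F i} (σ : ι' ≃ ι)
    (h : ∀ i, ‖g i‖ = ‖f (σ i)‖) (hf : Memℓp f p) : Memℓp g p := by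
  rcases p.trichotomy with rfl | rfl | hp
  · rw [memℓp_zero_iff] at hf ⊢
    refine (hf.preimage σ.injective.injOn).subset fun i hi => ?_
    rw [Set.mem_preimage, Set.mem_ofPred_eq, ← norm_ne_zero_iff, ← h]
    exact norm_ne_zero_iff.mpr hi
  · rw [memℓp_infty_iff] at hf ⊢
    simp only [h]
    rwa [← σ.surjective.range_comp] at hf
  · rw [memℓp_gen_iff hp] at hf ⊢
    simp only [h]
    exact hf.comp_injective σ.injective

lemma lp_norm_eq_of_norm_eq_comp {E : ι → Type*} {F : ι' → Type*} [∀ i, NormedAddCommGroup (E i)]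
    [∀ i, NormedAddCommGroup (F i)] {f : lp E p} {g : lp F p} (σ : ι' ≃ ι)
    (h : ∀ i, ‖g i‖ = ‖f (σ i)‖) : ‖g‖ = ‖f‖ := by
  rcases p.trichotomy with rfl | rfl | hp
  · have hzero (i : ι') : g i = 0 ↔ f (σ i) = 0 := by
      rw [← norm_eq_zero, h, norm_eq_zero]
    simp only [lp.norm_eq_card_dsupport]
    exact congrArg _ (Finset.card_equiv σ (by simpa [not_iff_not] using hzero))
  · simp only [lp.norm_eq_ciSup, h]
    exact σ.surjective.iSup_comp fun i => ‖f i‖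
  · simp only [lp.norm_eq_tsum_rpow hp, h]
    rw [σ.tsum_eq fun i => ‖f i‖ ^ p.toReal]

variable {𝕜 E F : Type*} [NormedField 𝕜] [NormedAddCommGroup E] [NormedSpace 𝕜 E]
  [NormedAddCommGroup F] [NormedSpace 𝕜 F] [Fact (1 ≤ p)]

/-- The weighted composition operator `f ↦ (i ↦ e i (f (σ i)))` between `ℓᵖ` spaces, for a
bijection `σ` of the index sets and isometries `e i` of the fibres. Translations, modulations and
reflections are all of this form. -/
noncomputable def lpWeightedComp (p : ℝ≥0∞) [Fact (1 ≤ p)] (σ : ι' ≃ ι) (e : ι' → E ≃ₗᵢ[𝕜] F) :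
    lp (fun _ : ι => E) p ≃ₗᵢ[𝕜] lp (fun _ : ι' => F) p where
  toFun f := ⟨fun i => e i (f (σ i)),
    memℓp_of_norm_eq_comp σ (fun i => (e i).norm_map _) (lp.memℓp f)⟩
  invFun g := ⟨fun i => (e (σ.symm i)).symm (g (σ.symm i)),
    memℓp_of_norm_eq_comp σ.symm (fun i => (e (σ.symm i)).symm.norm_map _) (lp.memℓp g)⟩
  map_add' f g := by ext i; exact (e i).map_add _ _
  map_smul' c f := by ext i; exact (e i).map_smul c _
  left_inv f := by ext i; simp
  right_inv g := by ext i; simp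
  norm_map' f := lp_norm_eq_of_norm_eq_comp σ fun i => (e i).norm_map _

@[simp]
lemma lpWeightedComp_apply (σ : ι' ≃ ι) (e : ι' → E ≃ₗᵢ[𝕜] F) (f : lp (fun _ : ι => E) p) (i : ι') :
    lpWeightedComp p σ e f i = e i (f (σ i)) := rfl

end WeightedComposition

section Shift

variable {E : Type*} [NormedAddCommGroup E] [NormedSpace ℂ E] {p : ℝ≥0∞} [Fact (1 ≤ p)]

/-- The shift `(S f) n = f (n + 1)`, as an invertible operator on `ℓᵖ(ℤ, E)`. -/
noncomputable def lpShift (p : ℝ≥0∞) [Fact (1 ≤ p)] (E : Type*) [NormedAddCommGroup E]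
    [NormedSpace ℂ E] : (lp (fun _ : ℤ => E) p →L[ℂ] lp (fun _ : ℤ => E) p)ˣ :=
  (lpWeightedComp p (Equiv.addRight 1)
    fun _ => LinearIsometryEquiv.refl ℂ E).toContinuousLinearEquiv.toUnit

@[simp]
lemma lpShift_apply (f : lp (fun _ : ℤ => E) p) (n : ℤ) : (lpShift p E).val f n = f (n + 1) :=
  rfl

@[simp]
lemma lpShift_inv_apply (f : lp (fun _ : ℤ => E) p) (n : ℤ) :
    (lpShift p E)⁻¹.val f n = f (n - 1) := rfl

lemma norm_lpShift_le_one : ‖(lpShift p E).val‖ ≤ 1 :=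
  LinearIsometry.norm_toContinuousLinearMap_le (lpWeightedComp p (Equiv.addRight 1)
    fun _ => LinearIsometryEquiv.refl ℂ E).toLinearIsometry

lemma norm_lpShift_inv_le_one : ‖(lpShift p E)⁻¹.val‖ ≤ 1 :=
  LinearIsometry.norm_toContinuousLinearMap_le (lpWeightedComp p (Equiv.addRight 1)
    fun _ => LinearIsometryEquiv.refl ℂ E).symm.toLinearIsometry

/-- Scalar multiplication by a complex number of modulus one, as an isometry. -/
noncomputable def circleSMul (E : Type*) [NormedAddCommGroup E] [NormedSpace ℂ E] (w : Circle) :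
    E ≃ₗᵢ[ℂ] E where
  toLinearEquiv := DistribMulAction.toLinearEquiv ℂ E w
  norm_map' x := by
    change ‖(w : ℂ) • x‖ = ‖x‖
    rw [norm_smul, Circle.norm_coe, one_mul]

@[simp]
lemma circleSMul_apply (w : Circle) (x : E) : circleSMul E w x = w • x := rfl

lemma spectrum_smul_lpShift (w : Circle) :
    spectrum ℂ ((w : ℂ) • (lpShift p E).val) = spectrum ℂ (lpShift p E).val := by
  refine spectrum_eq_of_intertwining (lpWeightedComp p (Equiv.refl ℤ)
    fun n => circleSMul E (w ^ n)).toContinuousLinearEquiv fun f => ?_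
  ext n
  simp [zpow_add, mul_comm (w ^ n), mul_smul, Circle.smul_def]

lemma spectrum_lpShift [CompleteSpace E] [Nontrivial E] :
    spectrum ℂ (lpShift p E).val = Metric.sphere 0 1 := by
  have : Nontrivial (lp (fun _ : ℤ => E) p) := by
    obtain ⟨x, hx⟩ := exists_ne (0 : E)
    refine ⟨lp.single p 0 x, 0, fun h => hx ?_⟩
    rw [← lp.single_apply_self (E := fun _ : ℤ => E) p 0 x, h, lp.coeFn_zero, Pi.zero_apply]
  refine spectrum_eq_sphere_of_spectrum_smul_eq ?_ spectrum_smul_lpShift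
  exact spectrum_subset_sphere_of_norm_le_one norm_lpShift_le_one norm_lpShift_inv_le_one

end Shift

section Laplacian

variable {E : Type*} [NormedAddCommGroup E] [NormedSpace ℂ E] {p : ℝ≥0∞} [Fact (1 ≤ p)]

/-- The (positive) discrete Laplacian `2 - S - S⁻¹` on `ℓᵖ(ℤ, E)`. -/
noncomputable def discreteLaplacian (p : ℝ≥0∞) [Fact (1 ≤ p)] (E : Type*) [NormedAddCommGroup E]
    [NormedSpace ℂ E] : lp (fun _ : ℤ => E) p →L[ℂ] lp (fun _ : ℤ => E) p :=
  algebraMap ℂ _ 2 - ((lpShift p E).val + (lpShift p E)⁻¹.val)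

lemma discreteLaplacian_apply (f : lp (fun _ : ℤ => E) p) (n : ℤ) :
    discreteLaplacian p E f n = (2 : ℂ) • f n - (f (n + 1) + f (n - 1)) := rfl

lemma image_two_sub_add_inv_sphere :
    (fun z : ℂ => 2 - (z + z⁻¹)) '' Metric.sphere 0 1 = Complex.ofReal '' Set.Icc 0 4 := by
  ext w
  constructor
  · rintro ⟨z, hz, rfl⟩
    rw [mem_sphere_zero_iff_norm] at hz
    have hre := abs_le.mp (hz ▸ Complex.abs_re_le_norm z)
    refine ⟨2 - 2 * z.re, ⟨by linarith, by linarith⟩, ?_⟩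
    simp only [Complex.inv_eq_conj hz, Complex.add_conj]
    push_cast
    rfl
  · rintro ⟨t, ⟨ht₀, ht₄⟩, rfl⟩
    set θ := Real.arccos ((2 - t) / 2) with hθ
    have hcos : 2 * Real.cos θ = 2 - t := by
      rw [hθ, Real.cos_arccos (by linarith) (by linarith)]
      ring
    have hcosC : 2 * Complex.cos θ = 2 - t := by
      exact_mod_cast congrArg Complex.ofReal hcos
    refine ⟨Complex.exp (θ * Complex.I), by simp, ?_⟩
    beta_reduce
    rw [← Complex.exp_neg, ← neg_mul, ← Complex.two_cos, hcosC, sub_sub_cancel]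

lemma spectrum_discreteLaplacian [CompleteSpace E] [Nontrivial E] :
    spectrum ℂ (discreteLaplacian p E) = Complex.ofReal '' Set.Icc 0 4 := by
  rw [discreteLaplacian, ← spectrum.singleton_sub_eq, spectrum_unit_add_inv, spectrum_lpShift,
    Set.singleton_sub, Set.image_image, image_two_sub_add_inv_sphere]

end Laplacian

section Dirac

/-- The space `ℓᵖ(ℤ, ℂ²)` on which the Dirac operator acts. -/
abbrev LpSpinor (p : ℝ≥0∞) : Type :=
  lp (fun _ : ℤ => EuclideanSpace ℂ (Fin 2)) p

variable {p : ℝ≥0∞} [Fact (1 ≤ p)] {m : ℂ} {D : LpSpinor p →L[ℂ] LpSpinor p}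

/-- `D` is the free discrete Dirac operator `[[m, d], [d*, -m]]` on `ℓᵖ(ℤ, ℂ²)`, given by its
components. Here `d* = 1 - S⁻¹` also for `p ≠ 2`, and the mass `m` may be complex. -/
structure IsFreeDirac (m : ℂ) (D : LpSpinor p →L[ℂ] LpSpinor p) : Prop where
  apply_zero (f : LpSpinor p) (n : ℤ) :
    D f n 0 = m * f n 0 + (f n 1 - f (n + 1) 1)
  apply_one (f : LpSpinor p) (n : ℤ) :
    D f n 1 = (f n 0 - f (n - 1) 0) - m * f n 1

lemma IsFreeDirac.sq_eq (hD : IsFreeDirac m D) :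
    D ^ 2 = algebraMap ℂ _ (m ^ 2) + discreteLaplacian p (EuclideanSpace ℂ (Fin 2)) := by
  ext f n i
  have hrhs : (algebraMap ℂ _ (m ^ 2) + discreteLaplacian p (EuclideanSpace ℂ (Fin 2))) f n i =
      m ^ 2 * f n i + (2 * f n i - (f (n + 1) i + f (n - 1) i)) := by
    change m ^ 2 * f n i + discreteLaplacian p _ f n i = _
    rw [discreteLaplacian_apply]
    rfl
  rw [hrhs, pow_two, mul_apply_eq_comp]
  fin_cases i
  · simp only [Fin.zero_eta, hD.apply_zero, hD.apply_one, add_sub_cancel_right]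
    ring
  · simp only [Fin.mk_one, hD.apply_zero, hD.apply_one, sub_add_cancel]
    ring

/-- The rotation `(x₀, x₁) ↦ (x₁, -x₀)` of `ℂ²`, which swaps the diagonal entries `m` and `-m`. -/
noncomputable def spinorRotation : EuclideanSpace ℂ (Fin 2) ≃ₗᵢ[ℂ] EuclideanSpace ℂ (Fin 2) :=
  (LinearIsometryEquiv.piLpCongrLeft 2 ℂ ℂ (Equiv.swap 0 1)).trans
    (LinearIsometryEquiv.piLpCongrRight 2 ![.refl ℂ ℂ, .neg ℂ])

/-- The isometry `f ↦ (n ↦ J (f (-n)))` of `ℓᵖ(ℤ, ℂ²)`, where `J` is `spinorRotation`.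
Reflecting `ℤ` exchanges `d` and `d*`, so this conjugates a Dirac operator to its negative. -/
noncomputable def spinorReflection (p : ℝ≥0∞) [Fact (1 ≤ p)] :
    LpSpinor p ≃ₗᵢ[ℂ] LpSpinor p :=
  lpWeightedComp p (Equiv.neg ℤ) fun _ => spinorRotation

lemma spinorReflection_apply_zero (f : LpSpinor p) (n : ℤ) :
    spinorReflection p f n 0 = f (-n) 1 := rfl

lemma spinorReflection_apply_one (f : LpSpinor p) (n : ℤ) :
    spinorReflection p f n 1 = -f (-n) 0 := rfl

lemma IsFreeDirac.spinorReflection_apply_apply (hD : IsFreeDirac m D) (f : LpSpinor p) :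
    spinorReflection p (D f) = -D (spinorReflection p f) := by
  ext n i
  rw [lp.coeFn_neg, Pi.neg_apply, PiLp.neg_apply]
  fin_cases i
  · simp only [Fin.zero_eta, hD.apply_zero, hD.apply_one, spinorReflection_apply_zero,
      spinorReflection_apply_one, neg_add']
    ring
  · simp only [Fin.mk_one, hD.apply_zero, hD.apply_one, spinorReflection_apply_zero,
      spinorReflection_apply_one, neg_sub', sub_neg_eq_add]
    ring

lemma IsFreeDirac.spectrum_neg_eq (hD : IsFreeDirac m D) : spectrum ℂ (-D) = spectrum ℂ D :=
  (spectrum_eq_of_intertwining (spinorReflection p).toContinuousLinearEquiv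
    hD.spinorReflection_apply_apply).symm

theorem dirac_spectrum_Z_general (hD : IsFreeDirac m D) :
    spectrum ℂ D = {z | z ^ 2 - m ^ 2 ∈ Complex.ofReal '' Set.Icc 0 4} := by
  ext z
  rw [← sq_mem_spectrum_sq_iff_of_spectrum_neg_eq hD.spectrum_neg_eq, hD.sq_eq,
    ← spectrum.vadd_eq, spectrum_discreteLaplacian, Set.mem_vadd_set_iff_neg_vadd_mem, vadd_eq_add,
    neg_add_eq_sub, Set.mem_ofPred_eq]

end Dirac

lemma sq_sub_sq_mem_Icc_iff_mem_bands {m : ℝ} (hm : 0 ≤ m) (x : ℝ) :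
    x ^ 2 - m ^ 2 ∈ Set.Icc 0 4 ↔
      x ∈ Set.Icc (-√(m ^ 2 + 4)) (-m) ∪ Set.Icc m √(m ^ 2 + 4) := by
  have hlower : 0 ≤ x ^ 2 - m ^ 2 ↔ m ≤ |x| := by
    rw [sub_nonneg, ← sq_abs x, sq_le_sq₀ hm (abs_nonneg x)]
  have hupper : x ^ 2 - m ^ 2 ≤ 4 ↔ |x| ≤ √(m ^ 2 + 4) := by
    rw [sub_le_iff_le_add', ← sq_abs x, Real.le_sqrt (abs_nonneg x) (by positivity)]
  rw [Set.mem_Icc, hlower, hupper, le_abs', abs_le, Set.mem_union, Set.mem_Icc, Set.mem_Icc]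
  have := Real.sqrt_nonneg (m ^ 2 + 4)
  grind

lemma setOf_sq_sub_sq_mem_eq_bands {m : ℝ} (hm : 0 ≤ m) :
    {z : ℂ | z ^ 2 - (m : ℂ) ^ 2 ∈ Complex.ofReal '' Set.Icc 0 4} = Complex.ofReal ''
      (Set.Icc (-√(m ^ 2 + 4)) (-m) ∪ Set.Icc m √(m ^ 2 + 4)) := by
  ext z
  constructor
  · rintro ⟨t, ht, htz⟩
    have hnonneg : 0 ≤ m ^ 2 + t := by
      linarith [sq_nonneg m, ht.1]
    have hsq : z ^ 2 = ((√(m ^ 2 + t) : ℝ) : ℂ) ^ 2 := by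
      rw [← Complex.ofReal_pow, Real.sq_sqrt hnonneg]
      push_cast
      linear_combination -htz
    have hsqrt_sq : √(m ^ 2 + t) ^ 2 - m ^ 2 ∈ Set.Icc 0 4 := by
      simpa [Real.sq_sqrt hnonneg] using ht
    rcases sq_eq_sq_iff_eq_or_eq_neg.mp hsq with h | h
    · exact ⟨√(m ^ 2 + t), (sq_sub_sq_mem_Icc_iff_mem_bands hm _).mp hsqrt_sq, h.symm⟩
    · refine ⟨-√(m ^ 2 + t), (sq_sub_sq_mem_Icc_iff_mem_bands hm _).mp ?_, by simp [h]⟩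
      rwa [neg_sq]
  · rintro ⟨x, hx, rfl⟩
    exact ⟨x ^ 2 - m ^ 2, (sq_sub_sq_mem_Icc_iff_mem_bands hm x).mpr hx, by push_cast; rfl⟩

/- The free discrete Dirac operator `D_m = [[m, d], [d*, -m]]` on `ℓ²(ℤ, ℂ²)`,
characterized by its pointwise action, has spectrum
`[-√(m²+4), -m] ∪ [m, √(m²+4)]`. Here `(d f)(n) = f n - f (n+1)` and
`(d* f)(n) = f n - f (n-1)`, and `ℓ²(ℤ, ℂ²)` is modeled as
`lp (fun _ : ℤ => EuclideanSpace ℂ (Fin 2)) 2`. -/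
theorem dirac_spectrum_Z (m : ℝ) (hm : 0 ≤ m)
    (D : lp (fun _ : ℤ => EuclideanSpace ℂ (Fin 2)) 2 →L[ℂ]
      lp (fun _ : ℤ => EuclideanSpace ℂ (Fin 2)) 2)
    (hD0 : ∀ (f : lp (fun _ : ℤ => EuclideanSpace ℂ (Fin 2)) 2) (n : ℤ),
      (D f) n 0 = m * f n 0 + (f n 1 - f (n + 1) 1))
    (hD1 : ∀ (f : lp (fun _ : ℤ => EuclideanSpace ℂ (Fin 2)) 2) (n : ℤ),
      (D f) n 1 = (f n 0 - f (n - 1) 0) - m * f n 1) :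
    spectrum ℂ D = (fun x : ℝ => (x : ℂ)) ''
      (Set.Icc (-Real.sqrt (m ^ 2 + 4)) (-m) ∪ Set.Icc m (Real.sqrt (m ^ 2 + 4))) :=
  (dirac_spectrum_Z_general ⟨hD0, hD1⟩).trans (setOf_sq_sub_sq_mem_eq_bands hm)
end

section
/- Let m ≥ 0. The free discrete Dirac operator D_m on ℓ²(ℤ₊,ℂ²) (ℤ₊ := ℤ ∩ [0,∞)) has no eigenvalues (D_m f = λ f with f ∈ ℓ²(ℤ₊,ℂ²) forces f = 0), and its spectrum is exactly [−√(m²+4), −m] ∪ [m, √(m²+4)]. -/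
/-!
The square of `D_m` is `m ^ 2 + diag (d d*, d* d)`, and `d d* - 2`, `d* d - 2` are, up to sign,
sums of two neighbouring shifts; hence `D_m ^ 2 - (m ^ 2 + 2)` has norm at most `2`. As `D_m` is
self-adjoint, every spectral value is a real `l` with `|l ^ 2 - (m ^ 2 + 2)| ≤ 2`, which describes
the two bands.

Conversely, let `l` satisfy this inequality and put `t = m ^ 2 + 2 - l ^ 2`. If
`(D_m - l) f = c • δ`, where `δ` is the lower unit vector at site `0`, then the sequence
`c, f 0 0, f 1 0, …` solves `u (n + 2) = t * u (n + 1) - u n` with `|t| ≤ 2`. The quadratic form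
`‖v‖ ^ 2 - t * ⟪v, w⟫ + ‖w‖ ^ 2` is conserved along this recurrence and dominates
`(‖v‖ - ‖w‖) ^ 2`, so a solution tending to `0` has constant norm and vanishes. Hence `c = 0` and
`f = 0`: there is no eigenvector and `δ` is not in the range of `D_m - l`.
-/

open Filter Polynomial Set Topology
open scoped ComplexConjugate RealInnerProductSpace

theorem mem_Icc_neg_union_Icc_iff {G : Type*} [AddCommGroup G] [LinearOrder G]
    [IsOrderedAddMonoid G] {r s l : G} (hr : 0 ≤ r) :
    l ∈ Icc (-s) (-r) ∪ Icc r s ↔ r ≤ |l| ∧ |l| ≤ s := by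
  rw [le_abs, abs_le]
  simp only [mem_union, mem_Icc]
  grind

theorem eq_of_succ_eq_of_tendsto {α : Type*} [TopologicalSpace α] [T2Space α] {x : ℕ → α} {a : α}
    (hx : ∀ n, x (n + 1) = x n) (hlim : Tendsto x atTop (𝓝 a)) (n : ℕ) : x n = a := by
  have hconst : ∀ k, x k = x 0 := by
    intro k
    induction k with
    | zero => rfl
    | succ k ih => exact (hx k).trans ih
  rw [funext hconst] at hlim
  exact (hconst n).trans (tendsto_nhds_unique tendsto_const_nhds hlim)

section ThreeTermRecurrence

variable {E : Type*} [NormedAddCommGroup E] [InnerProductSpace ℝ E] {t : ℝ}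

/-- The quadratic form on consecutive terms `v = u (n + 1)`, `w = u n` that is conserved by the
recurrence `u (n + 2) = t • u (n + 1) - u n`. -/
def threeTermForm (t : ℝ) (v w : E) : ℝ := ‖v‖ ^ 2 - t * ⟪v, w⟫ + ‖w‖ ^ 2

theorem threeTermForm_smul_sub (v w : E) : threeTermForm t (t • v - w) v = threeTermForm t v w := by
  simp only [threeTermForm, norm_sub_sq_real, inner_sub_left, real_inner_smul_left, norm_smul,
    real_inner_self_eq_norm_sq, real_inner_comm v w, mul_pow, Real.norm_eq_abs, sq_abs]
  ring

theorem sq_norm_sub_norm_le_threeTermForm (ht : |t| ≤ 2) (v w : E) :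
    (‖v‖ - ‖w‖) ^ 2 ≤ threeTermForm t v w := by
  have h : t * ⟪v, w⟫ ≤ 2 * (‖v‖ * ‖w‖) := calc
    t * ⟪v, w⟫ ≤ |t| * |⟪v, w⟫| := (le_abs_self _).trans_eq (abs_mul _ _)
    _ ≤ 2 * (‖v‖ * ‖w‖) := by gcongr; exact abs_real_inner_le_norm v w
  rw [threeTermForm]
  linarith

theorem eq_zero_of_three_term_of_tendsto {u : ℕ → E} (ht : |t| ≤ 2)
    (hrec : ∀ n, u (n + 2) = t • u (n + 1) - u n) (hu : Tendsto u atTop (𝓝 0)) (n : ℕ) :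
    u n = 0 := by
  have hu' : Tendsto (fun n => u (n + 1)) atTop (𝓝 0) := hu.comp (tendsto_add_atTop_nat 1)
  have hlim : Tendsto (fun n => threeTermForm t (u (n + 1)) (u n)) atTop (𝓝 0) := by
    simpa [threeTermForm] using
      ((hu'.norm.pow 2).sub ((hu'.inner hu).const_mul t)).add (hu.norm.pow 2)
  have hform : ∀ k, threeTermForm t (u (k + 1)) (u k) = 0 :=
    eq_of_succ_eq_of_tendsto (fun k => by rw [hrec, threeTermForm_smul_sub]) hlim
  have hnorm : ∀ k, ‖u (k + 1)‖ = ‖u k‖ := fun k => by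
    have hle := sq_norm_sub_norm_le_threeTermForm ht (u (k + 1)) (u k)
    rw [hform, sq_nonpos_iff] at hle
    exact sub_eq_zero.1 hle
  exact norm_eq_zero.1 (eq_of_succ_eq_of_tendsto hnorm (tendsto_zero_iff_norm_tendsto_zero.1 hu) n)

end ThreeTermRecurrence

theorem dirac_recursion_eq_zero {m l : ℝ} (hl : |l ^ 2 - (m ^ 2 + 2)| ≤ 2) {a b : ℕ → ℂ} {c : ℂ}
    (ha : Tendsto a atTop (𝓝 0)) (hb : Tendsto b atTop (𝓝 0))
    (upper : ∀ n, m * a n + (b n - b (n + 1)) - l * a n = 0)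
    (lower_succ : ∀ n, (a (n + 1) - a n) - m * b (n + 1) - l * b (n + 1) = 0)
    (lower_zero : a 0 - m * b 0 - l * b 0 = c) : c = 0 ∧ a = 0 ∧ b = 0 := by
  let u : ℕ → ℂ := fun n => Nat.casesOn n c a
  have hrec : ∀ n, u (n + 2) = (m ^ 2 + 2 - l ^ 2 : ℝ) • u (n + 1) - u n := by
    rintro (_ | n) <;> simp only [u, Complex.real_smul] <;> push_cast
    · linear_combination lower_succ 0 - lower_zero - (m + l) * upper 0
    · linear_combination lower_succ (n + 1) - lower_succ n - (m + l) * upper (n + 1)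
  have hu : ∀ n, u n = 0 :=
    eq_zero_of_three_term_of_tendsto (by rwa [abs_sub_comm]) hrec
      ((tendsto_add_atTop_iff_nat 1).1 ha)
  have hb' : ∀ n, b (n + 1) = b n := fun n => by
    linear_combination (m - l) * hu (n + 1) - upper n
  exact ⟨hu 0, funext fun n => hu (n + 1), funext (eq_of_succ_eq_of_tendsto hb' hb)⟩

theorem norm_eval_le_norm_aeval_of_mem_spectrum {𝕜 A : Type*} [NormedField 𝕜] [NormedRing A]
    [NormedAlgebra 𝕜 A] [CompleteSpace A] [StarRing A] [CStarRing A] {a : A} {k : 𝕜}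
    (hk : k ∈ spectrum 𝕜 a) (p : 𝕜[X]) : ‖p.eval k‖ ≤ ‖aeval a p‖ := by
  rcases subsingleton_or_nontrivial A with _ | _
  · simp [spectrum.of_subsingleton] at hk
  · exact spectrum.norm_le_norm_of_mem (spectrum.subset_polynomial_aeval a p ⟨k, hk, rfl⟩)

section LpSequences

variable {ι : Type*} {E : ι → Type*} [∀ i, NormedAddCommGroup (E i)]

theorem tendsto_norm_lp_cofinite {p : ENNReal} (hp : 0 < p.toReal) (f : lp E p) :
    Tendsto (fun i => ‖f i‖) cofinite (𝓝 0) := by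
  have h := (lp.hasSum_norm hp f).summable.tendsto_cofinite_zero.rpow_const
    (p := p.toReal⁻¹) (.inr (by positivity))
  simpa [← Real.rpow_mul, hp.ne'] using h

theorem hasSum_norm_sq_lp_two (f : lp E 2) : HasSum (fun i => ‖f i‖ ^ 2) (‖f‖ ^ 2) := by
  simpa using lp.hasSum_norm (p := 2) (by simp) f

end LpSequences

theorem norm_lp_two_le_of_norm_le_add_neighbors {E F : ℕ → Type*}
    [∀ n, NormedAddCommGroup (E n)] [∀ n, NormedAddCommGroup (F n)] {f : lp E 2} {g : lp F 2}
    (h₀ : ‖g 0‖ ≤ ‖f 0‖ + ‖f 1‖) (h : ∀ n, ‖g (n + 1)‖ ≤ ‖f n‖ + ‖f (n + 2)‖) : ‖g‖ ≤ 2 * ‖f‖ := by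
  have hf := hasSum_norm_sq_lp_two f
  have htail : ‖g‖ ^ 2 - ‖g 0‖ ^ 2 ≤ 2 * (‖f‖ ^ 2 + (‖f‖ ^ 2 - (‖f 0‖ ^ 2 + ‖f 1‖ ^ 2))) := by
    have hg := (hasSum_nat_add_iff' 1).2 (hasSum_norm_sq_lp_two g)
    have hf₂ := (hasSum_nat_add_iff' 2).2 hf
    simp only [Finset.sum_range_succ, Finset.sum_range_zero, zero_add] at hg hf₂
    exact hasSum_le (fun n => (pow_le_pow_left₀ (norm_nonneg _) (h n) 2).trans add_sq_le) hg
      ((hf.add hf₂).mul_left 2)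
  have hhead : ‖g 0‖ ^ 2 ≤ 2 * (‖f 0‖ ^ 2 + ‖f 1‖ ^ 2) :=
    (pow_le_pow_left₀ (norm_nonneg _) h₀ 2).trans add_sq_le
  refine le_of_sq_le_sq ?_ (by positivity)
  linarith

/-- The space `ℓ²(ℕ, ℂ²)` of square-summable spinors on the half-line. -/
abbrev SpinorL2 : Type := lp (fun _ : ℕ => EuclideanSpace ℂ (Fin 2)) 2

namespace SpinorL2

theorem tendsto_coord (f : SpinorL2) (i : Fin 2) : Tendsto (fun n => f n i) atTop (𝓝 0) :=
  squeeze_zero_norm (fun n => PiLp.norm_apply_le (f n) i)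
    (Nat.cofinite_eq_atTop ▸ tendsto_norm_lp_cofinite (by simp) f)

/-- The vector supported at site `0` with lower component `c` and upper component `0`. -/
noncomputable def lowerDelta (c : ℂ) : SpinorL2 :=
  lp.single (E := fun _ : ℕ => EuclideanSpace ℂ (Fin 2)) 2 0 (EuclideanSpace.single 1 c)

theorem lowerDelta_apply_zero (c : ℂ) : lowerDelta c 0 = EuclideanSpace.single 1 c :=
  lp.single_apply_self 2 0 _

theorem lowerDelta_apply_succ (c : ℂ) (n : ℕ) : lowerDelta c (n + 1) = 0 :=
  lp.single_apply_ne 2 0 _ n.succ_ne_zero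

theorem lowerDelta_zero : lowerDelta 0 = 0 := by
  have h : EuclideanSpace.single (1 : Fin 2) (0 : ℂ) = 0 := (PiLp.single_eq_zero_iff 2 1).2 rfl
  rw [lowerDelta, h, lp.single_zero]

/-- `D` acts as the free discrete Dirac operator of mass `m` on the half-line. The components `0`
and `1` of a spinor are the upper and lower ones; `lower_zero` is the boundary convention
`(d* f) 0 = f 0`. -/
structure IsFreeDirac (m : ℝ) (D : SpinorL2 →L[ℂ] SpinorL2) : Prop where
  upper : ∀ (f : SpinorL2) (n : ℕ), D f n 0 = m * f n 0 + (f n 1 - f (n + 1) 1)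
  lower_succ : ∀ (f : SpinorL2) (n : ℕ),
    D f (n + 1) 1 = (f (n + 1) 0 - f n 0) - m * f (n + 1) 1
  lower_zero : ∀ f : SpinorL2, D f 0 1 = f 0 0 - m * f 0 1

namespace IsFreeDirac

variable {m : ℝ} {D : SpinorL2 →L[ℂ] SpinorL2}

theorem sum_range_inner_sub_inner (hD : IsFreeDirac m D) (f g : SpinorL2) (n : ℕ) :
    ∑ k ∈ Finset.range (n + 1), (inner ℂ (D f k) (g k) - inner ℂ (f k) (D g k)) =
      g (n + 1) 1 * conj (f n 0) - g n 0 * conj (f (n + 1) 1) := by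
  induction n with
  | zero =>
    simp only [zero_add, Finset.sum_range_one, PiLp.inner_apply, RCLike.inner_apply,
      Fin.sum_univ_two, hD.upper, hD.lower_zero, map_add, map_sub, map_mul, Complex.conj_ofReal]
    ring
  | succ n ih =>
    rw [Finset.sum_range_succ, ih]
    simp only [PiLp.inner_apply, RCLike.inner_apply, Fin.sum_univ_two, hD.upper, hD.lower_succ,
      map_add, map_sub, map_mul, Complex.conj_ofReal]
    ring

theorem isSelfAdjoint (hD : IsFreeDirac m D) : IsSelfAdjoint D := by
  rw [ContinuousLinearMap.isSelfAdjoint_iff_isSymmetric]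
  intro f g
  have hsum : Tendsto
      (fun n => ∑ k ∈ Finset.range (n + 1), (inner ℂ (D f k) (g k) - inner ℂ (f k) (D g k)))
      atTop (𝓝 (inner ℂ (D f) g - inner ℂ f (D g))) :=
    ((lp.hasSum_inner (𝕜 := ℂ) (D f) g).sub (lp.hasSum_inner (𝕜 := ℂ) f (D g))).tendsto_sum_nat.comp
      (tendsto_add_atTop_nat 1)
  have hshift : ∀ (h : SpinorL2) (i : Fin 2), Tendsto (fun n => h (n + 1) i) atTop (𝓝 0) :=
    fun h i => (h.tendsto_coord i).comp (tendsto_add_atTop_nat 1)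
  have hboundary : Tendsto (fun n => g (n + 1) 1 * conj (f n 0) - g n 0 * conj (f (n + 1) 1))
      atTop (𝓝 0) := by
    simpa using ((hshift g 1).mul (f.tendsto_coord 0).star).sub
      ((g.tendsto_coord 0).mul (hshift f 1).star)
  exact sub_eq_zero.1
    (tendsto_nhds_unique (hsum.congr (hD.sum_range_inner_sub_inner f g)) hboundary)

theorem apply_apply_zero (hD : IsFreeDirac m D) (f : SpinorL2) :
    D (D f) 0 = (m ^ 2 + 2) • f 0 - (EuclideanSpace.single 1 (f 0 1) + f 1) := by
  ext i
  fin_cases i <;>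
    simp only [Fin.zero_eta, Fin.mk_one, hD.upper, hD.lower_succ, hD.lower_zero, zero_add,
      PiLp.sub_apply, PiLp.add_apply, PiLp.smul_apply, PiLp.single_eq_same,
      PiLp.single_eq_of_ne 2 zero_ne_one, Complex.real_smul] <;>
    push_cast <;>
    ring

theorem apply_apply_succ (hD : IsFreeDirac m D) (f : SpinorL2) (n : ℕ) :
    D (D f) (n + 1) = (m ^ 2 + 2) • f (n + 1) - (f n + f (n + 2)) := by
  ext i
  fin_cases i <;>
    simp only [Fin.zero_eta, Fin.mk_one, hD.upper, hD.lower_succ, PiLp.sub_apply, PiLp.add_apply,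
      PiLp.smul_apply, Complex.real_smul] <;>
    push_cast <;>
    ring

theorem norm_sq_sub_le (hD : IsFreeDirac m D) :
    ‖D ^ 2 - algebraMap ℝ (SpinorL2 →L[ℂ] SpinorL2) (m ^ 2 + 2)‖ ≤ 2 := by
  refine ContinuousLinearMap.opNorm_le_bound _ zero_le_two fun f => ?_
  have happly : ∀ n, (D ^ 2 - algebraMap ℝ (SpinorL2 →L[ℂ] SpinorL2) (m ^ 2 + 2)) f n =
      D (D f) n - (m ^ 2 + 2) • f n := fun n => by rw [pow_two]; rfl
  refine norm_lp_two_le_of_norm_le_add_neighbors ?_ fun n => ?_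
  · rw [happly, hD.apply_apply_zero, sub_sub_cancel_left, norm_neg]
    refine (norm_add_le _ _).trans (add_le_add_left ?_ _)
    exact (PiLp.norm_single 2 _ _ _).trans_le (PiLp.norm_apply_le (f 0) 1)
  · rw [happly, hD.apply_apply_succ, sub_sub_cancel_left, norm_neg]
    exact norm_add_le _ _

theorem eq_zero_of_apply_sub_eq_lowerDelta (hD : IsFreeDirac m D) {l : ℝ}
    (hl : |l ^ 2 - (m ^ 2 + 2)| ≤ 2) {f : SpinorL2} {c : ℂ}
    (hf : D f - l • f = lowerDelta c) : c = 0 ∧ f = 0 := by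
  have hcoord : ∀ n i, D f n i - l * f n i = lowerDelta c n i := fun n i => by rw [← hf]; rfl
  obtain ⟨hc, hupper, hlower⟩ := dirac_recursion_eq_zero hl (f.tendsto_coord 0) (f.tendsto_coord 1)
    (c := c)
    (fun n => by
      rw [← hD.upper, hcoord]
      cases n <;> simp [lowerDelta_apply_zero, lowerDelta_apply_succ])
    (fun n => by rw [← hD.lower_succ, hcoord, lowerDelta_apply_succ]; rfl)
    (by rw [← hD.lower_zero, hcoord]; simp [lowerDelta_apply_zero])
  refine ⟨hc, ?_⟩
  ext n i
  fin_cases i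
  exacts [congrFun hupper n, congrFun hlower n]

theorem spectrum_real_eq (hD : IsFreeDirac m D) :
    spectrum ℝ D = {l | |l ^ 2 - (m ^ 2 + 2)| ≤ 2} := by
  refine Subset.antisymm (fun l hl => ?_) (fun l hl hunit => ?_)
  · have h := norm_eval_le_norm_aeval_of_mem_spectrum hl (X ^ 2 - C (m ^ 2 + 2))
    rw [map_sub, aeval_C, map_pow, aeval_X, eval_sub, eval_C, eval_pow, eval_X] at h
    exact h.trans hD.norm_sq_sub_le
  · obtain ⟨f, hf⟩ := (ContinuousLinearMap.isUnit_iff_bijective.1 (IsUnit.sub_iff.1 hunit)).2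
      (lowerDelta 1)
    exact one_ne_zero (hD.eq_zero_of_apply_sub_eq_lowerDelta hl hf).1

theorem spectrum_complex_eq (hD : IsFreeDirac m D) :
    spectrum ℂ D = Complex.ofReal '' {l | |l ^ 2 - (m ^ 2 + 2)| ≤ 2} := by
  rw [← hD.spectrum_real_eq]
  exact hD.isSelfAdjoint.spectrumRestricts.algebraMap_image.symm

theorem eq_zero_of_apply_eq_smul (hD : IsFreeDirac m D) {z : ℂ} {f : SpinorL2}
    (hf : D f = z • f) : f = 0 := by
  by_contra hne
  have hz : z ∈ spectrum ℂ D := by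
    rw [ContinuousLinearMap.spectrum_eq]
    exact (Module.End.hasEigenvalue_of_hasEigenvector
      ⟨Module.End.mem_eigenspace_iff.2 hf, hne⟩).mem_spectrum
  rw [hD.spectrum_complex_eq] at hz
  obtain ⟨l, hl, rfl⟩ := hz
  refine hne (hD.eq_zero_of_apply_sub_eq_lowerDelta hl (c := 0) ?_).2
  rw [lowerDelta_zero, hf]
  exact sub_self _

end IsFreeDirac

end SpinorL2

theorem mem_dirac_bands_iff {m l : ℝ} :
    l ∈ Icc (-√(m ^ 2 + 4)) (-|m|) ∪ Icc |m| √(m ^ 2 + 4) ↔ |l ^ 2 - (m ^ 2 + 2)| ≤ 2 := by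
  rw [mem_Icc_neg_union_Icc_iff (abs_nonneg m), ← sq_le_sq,
    Real.le_sqrt (abs_nonneg l) (by positivity), sq_abs, abs_le]
  constructor <;> rintro ⟨h₁, h₂⟩ <;> constructor <;> linarith

theorem dirac_spectrum_N_general {m : ℝ} {D : SpinorL2 →L[ℂ] SpinorL2}
    (hD : SpinorL2.IsFreeDirac m D) :
    (∀ (z : ℂ) (f : SpinorL2), D f = z • f → f = 0) ∧
    spectrum ℂ D = Complex.ofReal '' (Icc (-√(m ^ 2 + 4)) (-|m|) ∪ Icc |m| √(m ^ 2 + 4)) := by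
  refine ⟨fun _ _ => hD.eq_zero_of_apply_eq_smul, ?_⟩
  rw [hD.spectrum_complex_eq]
  exact congrArg _ (Set.ext fun _ => mem_dirac_bands_iff.symm)

/- The free discrete Dirac operator `D_m` on `ℓ²(ℤ₊, ℂ²)` (with boundary
convention `(d* f)(0) = f 0`) has no eigenvalues, and its spectrum is exactly
`[-√(m²+4), -m] ∪ [m, √(m²+4)]`. `ℓ²(ℤ₊, ℂ²)` is modeled as
`lp (fun _ : ℕ => EuclideanSpace ℂ (Fin 2)) 2`. -/
theorem dirac_spectrum_N (m : ℝ) (hm : 0 ≤ m)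
    (D : lp (fun _ : ℕ => EuclideanSpace ℂ (Fin 2)) 2 →L[ℂ]
      lp (fun _ : ℕ => EuclideanSpace ℂ (Fin 2)) 2)
    (hD0 : ∀ (f : lp (fun _ : ℕ => EuclideanSpace ℂ (Fin 2)) 2) (n : ℕ),
      (D f) n 0 = m * f n 0 + (f n 1 - f (n + 1) 1))
    (hD1 : ∀ (f : lp (fun _ : ℕ => EuclideanSpace ℂ (Fin 2)) 2) (n : ℕ),
      (D f) (n + 1) 1 = (f (n + 1) 0 - f n 0) - m * f (n + 1) 1)
    (hD1' : ∀ (f : lp (fun _ : ℕ => EuclideanSpace ℂ (Fin 2)) 2),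
      (D f) 0 1 = f 0 0 - m * f 0 1) :
    (∀ (lam : ℂ) (f : lp (fun _ : ℕ => EuclideanSpace ℂ (Fin 2)) 2),
        D f = lam • f → f = 0) ∧
    spectrum ℂ D = (fun x : ℝ => (x : ℂ)) ''
      (Set.Icc (-Real.sqrt (m ^ 2 + 4)) (-m) ∪ Set.Icc m (Real.sqrt (m ^ 2 + 4))) := by
  simpa only [abs_of_nonneg hm] using dirac_spectrum_N_general ⟨hD0, hD1, hD1'⟩
end

section
/- Let 𝕏 = ℤ or 𝕏 = ℤ_k := ℤ ∩ [k,∞). For every λ ∈ ℍ, every V = (V₁,V₂)ᵗ ∈ ℓ^∞(𝕏,ℝ²) and every W = (W₁,W₂)ᵗ ∈ ℓ^∞(𝕏,ℂ²), the bounded operators Δ_{1,λ,V,W} and Δ_{2,λ,V,W} on ℓ²(𝕏,ℂ) are invertible (bijective with bounded inverse). -/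
noncomputable section
open scoped ENNReal ComplexConjugate

/-! Both `M₁ = λ - m - V₁` and `M₂ = λ + m - V₂` satisfy `Im ⟪x, Mᵢ x⟫ = Im λ ‖x‖²`. With
`y = M₂⁻¹ x` this gives `Im ⟪x, M₂⁻¹ x⟫ = Im ⟪M₂ y, y⟫ = -Im ⟪y, M₂ y⟫ ≤ 0`. Since `d̃*` is the
adjoint of `d̃`, also at the left endpoint, it follows that
`Im ⟪x, Δ₁ x⟫ = Im ⟪d̃* x, M₂⁻¹ d̃* x⟫ - Im ⟪x, M₁ x⟫ ≤ -Im λ ‖x‖²`,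
so `Δ₁` is invertible by the Lax–Milgram lemma. Exchanging `d̃` and `d̃*` gives `Δ₂`. -/

open Function
open scoped InnerProductSpace lp

section HilbertSpace

variable {E F : Type*} [NormedAddCommGroup E] [InnerProductSpace ℂ E]
  [NormedAddCommGroup F] [InnerProductSpace ℂ F]

/-- Strict positivity of the imaginary part `(A - A*) / 2i` of a bounded operator `A`, phrased
through quadratic forms; this is coercivity of `-iA`. -/
def ImCoercive (A : E →L[ℂ] E) : Prop :=
  ∃ ε > 0, ∀ x, ε * ‖x‖ ^ 2 ≤ (⟪x, A x⟫_ℂ).im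

namespace ImCoercive

variable {A N : E →L[ℂ] E}

theorem im_inner_nonneg (hA : ImCoercive A) (x : E) : 0 ≤ (⟪x, A x⟫_ℂ).im := by
  obtain ⟨ε, hε, h⟩ := hA
  exact (by positivity : 0 ≤ ε * ‖x‖ ^ 2).trans (h x)

theorem isUnit [CompleteSpace E] (hA : ImCoercive A) : IsUnit A := by
  obtain ⟨ε, hε, h⟩ := hA
  refine A.isUnit_of_forall_le_norm_inner_map (c := ⟨ε, hε.le⟩) hε fun x ↦ ?_
  calc ‖x‖ ^ 2 * ε = ε * ‖x‖ ^ 2 := mul_comm _ _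
    _ ≤ (⟪x, A x⟫_ℂ).im := h x
    _ ≤ ‖⟪x, A x⟫_ℂ‖ := (le_abs_self _).trans (Complex.abs_im_le_norm _)
    _ = ‖⟪A x, x⟫_ℂ‖ := norm_inner_symm _ _

theorem sub_of_im_inner_nonpos (hA : ImCoercive A) (hN : ∀ x, (⟪x, N x⟫_ℂ).im ≤ 0) :
    ImCoercive (A - N) := by
  obtain ⟨ε, hε, h⟩ := hA
  refine ⟨ε, hε, fun x ↦ ?_⟩
  rw [sub_apply, inner_sub_right, Complex.sub_im]
  linarith [h x, hN x]

end ImCoercive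

theorem im_inner_nonpos_of_comp_eq_id {B B' : E →L[ℂ] E} (hB : ∀ x, 0 ≤ (⟪x, B x⟫_ℂ).im)
    (hBB' : B ∘L B' = .id ℂ E) (x : E) : (⟪x, B' x⟫_ℂ).im ≤ 0 := by
  have hx : B (B' x) = x := DFunLike.congr_fun hBB' x
  have hform : (⟪x, B' x⟫_ℂ).im = -(⟪B' x, B (B' x)⟫_ℂ).im := by
    rw [hx, ← inner_conj_symm, Complex.conj_im]
  rw [hform]
  exact neg_nonpos.2 (hB _)

theorem ImCoercive.isUnit_comp_comp_adjoint_sub [CompleteSpace E] [CompleteSpace F]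
    {A : E →L[ℂ] E} {B B' : F →L[ℂ] F} (hA : ImCoercive A) (hB : ∀ y, 0 ≤ (⟪y, B y⟫_ℂ).im)
    (hBB' : B ∘L B' = .id ℂ F) (D : F →L[ℂ] E) : IsUnit (D ∘L B' ∘L D.adjoint - A) := by
  have hDB'D : ∀ x, (⟪x, (D ∘L B' ∘L D.adjoint) x⟫_ℂ).im ≤ 0 := fun x ↦ by
    rw [ContinuousLinearMap.comp_apply, ← D.adjoint_inner_left]
    exact im_inner_nonpos_of_comp_eq_id hB hBB' (D.adjoint x)
  rw [← neg_sub A, IsUnit.neg_iff]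
  exact (hA.sub_of_im_inner_nonpos hDB'D).isUnit

end HilbertSpace

section Multiplication

variable {ι : Type*}

theorem hasSum_im_inner_of_forall_apply_eq_mul {a : ι → ℂ} {f g : ℓ²(ι, ℂ)}
    (hg : ∀ i, g i = a i * f i) :
    HasSum (fun i ↦ (a i).im * ‖f i‖ ^ 2) (⟪f, g⟫_ℂ).im := by
  convert Complex.hasSum_im (lp.hasSum_inner (𝕜 := ℂ) f g) using 2 with i
  rw [hg, RCLike.inner_apply, mul_assoc, Complex.mul_conj, Complex.normSq_eq_norm_sq,
    Complex.im_mul_ofReal]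

theorem imCoercive_of_forall_apply_eq_mul {a : ι → ℂ} {ε : ℝ} (hε : 0 < ε)
    (ha : ∀ i, ε ≤ (a i).im) {A : ℓ²(ι, ℂ) →L[ℂ] ℓ²(ι, ℂ)} (hA : ∀ f i, A f i = a i * f i) :
    ImCoercive A := by
  refine ⟨ε, hε, fun f ↦ ?_⟩
  have hnorm : HasSum (fun i ↦ ‖f i‖ ^ 2) (‖f‖ ^ 2) := by
    simpa using lp.hasSum_norm (p := 2) (by norm_num) f
  exact hasSum_le (fun i ↦ by gcongr; exact ha i) (hnorm.mul_left ε)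
    (hasSum_im_inner_of_forall_apply_eq_mul (hA f))

theorem comp_eq_id_of_forall_apply_eq_mul {𝕜 : Type*} [RCLike 𝕜] {a : ι → 𝕜} (ha : ∀ i, a i ≠ 0)
    {A A' : ℓ²(ι, 𝕜) →L[𝕜] ℓ²(ι, 𝕜)} (hA : ∀ f i, A f i = a i * f i)
    (hA' : ∀ f i, A' f i = (a i)⁻¹ * f i) : A ∘L A' = .id 𝕜 ℓ²(ι, 𝕜) := by
  ext f i
  rw [ContinuousLinearMap.comp_apply, hA, hA', mul_inv_cancel_left₀ (ha i),
    ContinuousLinearMap.id_apply]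

end Multiplication

section TwoTermDifference

variable {ι 𝕜 : Type*} [RCLike 𝕜]

theorem adjoint_apply_eq_inner_single [DecidableEq ι] {E : Type*} [NormedAddCommGroup E]
    [InnerProductSpace 𝕜 E] [CompleteSpace E] (D : ℓ²(ι, 𝕜) →L[𝕜] E) (x : E) (i : ι) :
    D.adjoint x i = ⟪D (lp.single 2 i 1), x⟫_𝕜 := by
  rw [← ContinuousLinearMap.adjoint_inner_right, lp.inner_single_left]
  simp

variable {s : ι → ι} {p q : ι → 𝕜} {D D' : ℓ²(ι, 𝕜) →L[𝕜] ℓ²(ι, 𝕜)}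

theorem twoTerm_apply_single [DecidableEq ι] (hs : Injective s)
    (hD : ∀ f i, D f i = p i * f i + q i * f (s i)) (i : ι) :
    D (lp.single 2 (s i) 1) = lp.single 2 (s i) (p (s i)) + lp.single 2 i (q i) := by
  ext j
  rw [hD, lp.coeFn_add, Pi.add_apply]
  simp only [lp.single_apply, Pi.single_apply, hs.eq_iff]
  grind

theorem twoTerm_apply_single_of_notMem_range [DecidableEq ι]
    (hD : ∀ f i, D f i = p i * f i + q i * f (s i)) {k : ι} (hk : k ∉ Set.range s) :
    D (lp.single 2 k 1) = lp.single 2 k (p k) := by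
  ext j
  rw [hD]
  simp only [lp.single_apply, Pi.single_apply]
  grind

theorem adjoint_eq_of_twoTerm (hs : Injective s)
    (hD : ∀ f i, D f i = p i * f i + q i * f (s i))
    (hD' : ∀ f i, D' f (s i) = conj (p (s i)) * f (s i) + conj (q i) * f i)
    (hD'_boundary : ∀ f, ∀ k ∉ Set.range s, D' f k = conj (p k) * f k) :
    D.adjoint = D' := by
  classical
  ext f k
  rw [adjoint_apply_eq_inner_single]
  by_cases hk : k ∈ Set.range s
  · obtain ⟨i, rfl⟩ := hk
    rw [twoTerm_apply_single hs hD, inner_add_left, lp.inner_single_left, lp.inner_single_left,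
      hD', RCLike.inner_apply', RCLike.inner_apply']
  · rw [twoTerm_apply_single_of_notMem_range hD hk, lp.inner_single_left, hD'_boundary f k hk,
      RCLike.inner_apply']

end TwoTermDifference

-- The theorem is the case `s = (· + 1)`, which is onto on `ℤ` and misses only the left
-- endpoint of `ℤ_k`.
theorem deltaOps_invertible_general {ι : Type*} {s : ι → ι} (hs : Injective s) {m : ℝ} {lam : ℂ}
    (hlam : 0 < lam.im) {V₁ V₂ W₁ W₂ : ι → ℂ} (hV₁ : ∀ i, (V₁ i).im ≤ 0)
    (hV₂ : ∀ i, (V₂ i).im ≤ 0) {D D' M₁ M₁inv M₂ M₂inv : ℓ²(ι, ℂ) →L[ℂ] ℓ²(ι, ℂ)}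
    (hD : ∀ f i, D f i = (1 + W₁ i) * f i + (-1 + W₂ i) * f (s i))
    (hD' : ∀ f i, D' f (s i) = (1 + conj (W₁ (s i))) * f (s i) - (1 - conj (W₂ i)) * f i)
    (hD'_boundary : ∀ f, ∀ k ∉ Set.range s, D' f k = (1 + conj (W₁ k)) * f k)
    (hM₁ : ∀ f i, M₁ f i = (lam - m - V₁ i) * f i)
    (hM₁inv : ∀ f i, M₁inv f i = (lam - m - V₁ i)⁻¹ * f i)
    (hM₂ : ∀ f i, M₂ f i = (lam + m - V₂ i) * f i)
    (hM₂inv : ∀ f i, M₂inv f i = (lam + m - V₂ i)⁻¹ * f i) :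
    IsUnit (D ∘L M₂inv ∘L D' - M₁) ∧ IsUnit (D' ∘L M₁inv ∘L D - M₂) := by
  have hadj : D.adjoint = D' :=
    adjoint_eq_of_twoTerm hs hD
      (fun f i ↦ by rw [hD']; simp only [map_add, map_neg, map_one]; ring)
      (fun f k hk ↦ by rw [hD'_boundary f k hk, map_add, map_one])
  have him₁ (i : ι) : lam.im ≤ (lam - m - V₁ i).im := by simpa using hV₁ i
  have him₂ (i : ι) : lam.im ≤ (lam + m - V₂ i).im := by simpa using hV₂ i
  have hcoer₁ : ImCoercive M₁ := imCoercive_of_forall_apply_eq_mul hlam him₁ hM₁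
  have hcoer₂ : ImCoercive M₂ := imCoercive_of_forall_apply_eq_mul hlam him₂ hM₂
  have hne {z : ℂ} (hz : lam.im ≤ z.im) : z ≠ 0 :=
    ne_of_apply_ne Complex.im (hlam.trans_le hz).ne'
  have hinv₁ : M₁ ∘L M₁inv = .id ℂ _ :=
    comp_eq_id_of_forall_apply_eq_mul (fun i ↦ hne (him₁ i)) hM₁ hM₁inv
  have hinv₂ : M₂ ∘L M₂inv = .id ℂ _ :=
    comp_eq_id_of_forall_apply_eq_mul (fun i ↦ hne (him₂ i)) hM₂ hM₂inv
  constructor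
  · rw [← hadj]
    exact hcoer₁.isUnit_comp_comp_adjoint_sub hcoer₂.im_inner_nonneg hinv₂ D
  · rw [← D.adjoint_adjoint, hadj]
    exact hcoer₂.isUnit_comp_comp_adjoint_sub hcoer₁.im_inner_nonneg hinv₁ D'

/- For `λ ∈ ℍ` and bounded potentials `V = (V₁,V₂)` (real) and `W = (W₁,W₂)`
(complex), the operators `Δ_{1,λ,V,W} = d̃ (λ+m-V₂)⁻¹ d̃* - (λ-m-V₁)` and
`Δ_{2,λ,V,W} = d̃* (λ-m-V₁)⁻¹ d̃ - (λ+m-V₂)` on `ℓ²(𝕏,ℂ)` are invertible with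
bounded inverse, both for `𝕏 = ℤ` and for `𝕏 = ℤ_k = ℤ ∩ [k,∞)` (the latter
modeled on `ℓ²(ℕ,ℂ)` via the identification `j ↔ k + j`, with the boundary
convention `(d̃* f)` at the left endpoint). The operators `d̃`, `d̃*` and the
multiplication operators are characterized by their pointwise action. -/
theorem deltaOps_invertible (m : ℝ) (hm : 0 ≤ m) (lam : ℂ) (hlam : 0 < lam.im) :
    (∀ (V₁ V₂ : ℤ → ℝ) (W₁ W₂ : ℤ → ℂ),
      Memℓp V₁ ∞ → Memℓp V₂ ∞ → Memℓp W₁ ∞ → Memℓp W₂ ∞ →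
      ∀ dtil dtilStar M1 M1inv M2 M2inv :
          lp (fun _ : ℤ => ℂ) 2 →L[ℂ] lp (fun _ : ℤ => ℂ) 2,
        (∀ (f : lp (fun _ : ℤ => ℂ) 2) (n : ℤ),
          dtil f n = (1 + W₁ n) * f n + (-1 + W₂ n) * f (n + 1)) →
        (∀ (f : lp (fun _ : ℤ => ℂ) 2) (n : ℤ),
          dtilStar f n = (1 + conj (W₁ n)) * f n - (1 - conj (W₂ (n - 1))) * f (n - 1)) →
        (∀ (f : lp (fun _ : ℤ => ℂ) 2) (n : ℤ), M1 f n = (lam - m - V₁ n) * f n) →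
        (∀ (f : lp (fun _ : ℤ => ℂ) 2) (n : ℤ), M1inv f n = (lam - m - V₁ n)⁻¹ * f n) →
        (∀ (f : lp (fun _ : ℤ => ℂ) 2) (n : ℤ), M2 f n = (lam + m - V₂ n) * f n) →
        (∀ (f : lp (fun _ : ℤ => ℂ) 2) (n : ℤ), M2inv f n = (lam + m - V₂ n)⁻¹ * f n) →
        IsUnit (dtil ∘L M2inv ∘L dtilStar - M1) ∧
        IsUnit (dtilStar ∘L M1inv ∘L dtil - M2)) ∧
    (∀ (k : ℤ) (V₁ V₂ : ℤ → ℝ) (W₁ W₂ : ℤ → ℂ),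
      Memℓp V₁ ∞ → Memℓp V₂ ∞ → Memℓp W₁ ∞ → Memℓp W₂ ∞ →
      ∀ dtil dtilStar M1 M1inv M2 M2inv :
          lp (fun _ : ℕ => ℂ) 2 →L[ℂ] lp (fun _ : ℕ => ℂ) 2,
        (∀ (f : lp (fun _ : ℕ => ℂ) 2) (j : ℕ),
          dtil f j = (1 + W₁ (k + j)) * f j + (-1 + W₂ (k + j)) * f (j + 1)) →
        (∀ f : lp (fun _ : ℕ => ℂ) 2, dtilStar f 0 = (1 + conj (W₁ k)) * f 0) →
        (∀ (f : lp (fun _ : ℕ => ℂ) 2) (j : ℕ),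
          dtilStar f (j + 1) =
            (1 + conj (W₁ (k + j + 1))) * f (j + 1) - (1 - conj (W₂ (k + j))) * f j) →
        (∀ (f : lp (fun _ : ℕ => ℂ) 2) (j : ℕ), M1 f j = (lam - m - V₁ (k + j)) * f j) →
        (∀ (f : lp (fun _ : ℕ => ℂ) 2) (j : ℕ), M1inv f j = (lam - m - V₁ (k + j))⁻¹ * f j) →
        (∀ (f : lp (fun _ : ℕ => ℂ) 2) (j : ℕ), M2 f j = (lam + m - V₂ (k + j)) * f j) →
        (∀ (f : lp (fun _ : ℕ => ℂ) 2) (j : ℕ), M2inv f j = (lam + m - V₂ (k + j))⁻¹ * f j) →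
        IsUnit (dtil ∘L M2inv ∘L dtilStar - M1) ∧
        IsUnit (dtilStar ∘L M1inv ∘L dtil - M2)) := by
  refine ⟨fun V₁ V₂ W₁ W₂ _ _ _ _ dtil dtilStar M1 M1inv M2 M2inv hd hds ↦ ?_,
    fun k V₁ V₂ W₁ W₂ _ _ _ _ dtil dtilStar M1 M1inv M2 M2inv hd hds₀ hds ↦ ?_⟩
  · exact deltaOps_invertible_general (add_left_injective 1) hlam (by simp) (by simp) hd
      (by simp [hds]) (fun _ k hk ↦ (hk ⟨k - 1, sub_add_cancel k 1⟩).elim)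
  · exact deltaOps_invertible_general (add_left_injective 1) hlam (by simp) (by simp) hd
      (by simp [hds, add_assoc]) fun f k hk ↦ by
        obtain rfl : k = 0 := by simpa using hk
        simp [hds₀]

end
end

section
/- Let 𝕏 = ℤ or 𝕏 = ℤ_k := ℤ ∩ [k,∞), λ ∈ ℍ, V = (V₁,V₂)ᵗ ∈ ℓ^∞(𝕏,ℝ²) and W = (W₁,W₂)ᵗ ∈ ℓ^∞(𝕏,ℂ²). Then H_{m,V,W} − λ is invertible on ℓ²(𝕏,ℂ²) and its inverse is the block operator (H_{m,V,W} − λ)⁻¹ = [[Δ_{1,λ,V,W}⁻¹, Δ_{1,λ,V,W}⁻¹·d̃·(λ+m−V₂)⁻¹],[Δ_{2,λ,V,W}⁻¹·d̃*·(λ−m−V₁)⁻¹, Δ_{2,λ,V,W}⁻¹]]. -/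
noncomputable section
open scoped ENNReal ComplexConjugate

/-!
Write `A = λ - m - V₁` and `D = λ + m - V₂`, so that `H - λ = [[-A, d̃], [d̃*, -D]]` and `Δ₁`, `Δ₂`
are the two Schur complements of this block operator. Eliminating one unknown gives the left
inverse. For the right inverse the key is the intertwining relation `Δ₁ A⁻¹ d̃ = d̃ D⁻¹ Δ₂`,
that is `Δ₁⁻¹ d̃ D⁻¹ = A⁻¹ d̃ Δ₂⁻¹`, which rewrites the off-diagonal entries of the candidate
inverse so that they cancel against the diagonal of `H - λ`.
-/

section SchurComplement

open Function

variable {R E F : Type*} [Semiring R] [AddCommGroup E] [AddCommGroup F] [Module R E] [Module R F]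

/-- The Schur complement `B D⁻¹ C - A` of the block operator `[[-A, B], [C, -D]]`, where the
argument `Dinv` stands for `D⁻¹`. Exchanging the roles of the two factors, the complementary one is
`schurComplement D C B Ainv`. -/
def schurComplement (A : E →ₗ[R] E) (B : F →ₗ[R] E) (C : E →ₗ[R] F) (Dinv : F →ₗ[R] F) :
    E →ₗ[R] E :=
  B ∘ₗ Dinv ∘ₗ C - A

/-- The block operator `[[-A, B], [C, -D]]` on `E × F`. The diagonal is negated, as in `H - λ`, so
that no sign appears in its inverse `schurInverse`. -/
def signedBlock (A : E →ₗ[R] E) (B : F →ₗ[R] E) (C : E →ₗ[R] F) (D : F →ₗ[R] F) :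
    E × F →ₗ[R] E × F :=
  (B ∘ₗ .snd R E F - A ∘ₗ .fst R E F).prod (C ∘ₗ .fst R E F - D ∘ₗ .snd R E F)

/-- The block operator `[[S, S B D⁻¹], [T C A⁻¹, T]]`, which inverts `[[-A, B], [C, -D]]` when `S`
and `T` invert its two Schur complements. -/
def schurInverse (Ainv : E →ₗ[R] E) (B : F →ₗ[R] E) (C : E →ₗ[R] F) (Dinv : F →ₗ[R] F)
    (S : E →ₗ[R] E) (T : F →ₗ[R] F) : E × F →ₗ[R] E × F :=
  (S ∘ₗ LinearMap.coprod .id (B ∘ₗ Dinv)).prod (T ∘ₗ LinearMap.coprod (C ∘ₗ Ainv) .id)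

variable {A Ainv S : E →ₗ[R] E} {D Dinv T : F →ₗ[R] F} {B : F →ₗ[R] E} {C : E →ₗ[R] F}

theorem schurInverse_leftInverse_signedBlock
    (hA : LeftInverse Ainv A) (hD : LeftInverse Dinv D)
    (hS : LeftInverse S (schurComplement A B C Dinv))
    (hT : LeftInverse T (schurComplement D C B Ainv)) :
    LeftInverse (schurInverse Ainv B C Dinv S T) (signedBlock A B C D) := by
  rintro ⟨x, y⟩
  have eliminate_snd : B y - A x + B (Dinv (C x - D y)) = schurComplement A B C Dinv x := by
    simp [schurComplement, hD y]
  have eliminate_fst : C (Ainv (B y - A x)) + (C x - D y) = schurComplement D C B Ainv y := by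
    simp [schurComplement, hA x]
  exact Prod.ext ((congrArg S eliminate_snd).trans (hS x))
    ((congrArg T eliminate_fst).trans (hT y))

theorem schurComplement_apply_intertwine (hA : RightInverse Ainv A) (hD : LeftInverse Dinv D)
    (y : F) :
    schurComplement A B C Dinv (Ainv (B y)) = B (Dinv (schurComplement D C B Ainv y)) := by
  simp [schurComplement, hA (B y), hD y]

theorem schurComplement_inverse_intertwine (hA : RightInverse Ainv A) (hD : LeftInverse Dinv D)
    (hS : LeftInverse S (schurComplement A B C Dinv))
    (hT : RightInverse T (schurComplement D C B Ainv)) (y : F) :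
    S (B (Dinv y)) = Ainv (B (T y)) :=
  calc
    S (B (Dinv y)) = S (B (Dinv (schurComplement D C B Ainv (T y)))) := by rw [hT y]
    _ = S (schurComplement A B C Dinv (Ainv (B (T y)))) := by
      rw [schurComplement_apply_intertwine hA hD]
    _ = Ainv (B (T y)) := hS _

theorem schurInverse_rightInverse_signedBlock
    (hA : LeftInverse Ainv A) (hA' : RightInverse Ainv A)
    (hD : LeftInverse Dinv D) (hD' : RightInverse Dinv D)
    (hS : LeftInverse S (schurComplement A B C Dinv))
    (hS' : RightInverse S (schurComplement A B C Dinv))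
    (hT : LeftInverse T (schurComplement D C B Ainv))
    (hT' : RightInverse T (schurComplement D C B Ainv)) :
    RightInverse (schurInverse Ainv B C Dinv S T) (signedBlock A B C D) := by
  rintro ⟨x, y⟩
  have solve_fst : S (x + B (Dinv y)) = S x + Ainv (B (T y)) := by
    rw [map_add, schurComplement_inverse_intertwine hA' hD hS hT']
  have solve_snd : T (C (Ainv x) + y) = Dinv (C (S x)) + T y := by
    rw [map_add, schurComplement_inverse_intertwine hD' hA hT hS']
  refine Prod.ext ?_ ?_
  · calc
      B (T (C (Ainv x) + y)) - A (S (x + B (Dinv y))) = schurComplement A B C Dinv (S x) := by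
        simp [solve_fst, solve_snd, schurComplement, hA' (B (T y))]
      _ = x := hS' x
  · calc
      C (S (x + B (Dinv y))) - D (T (C (Ainv x) + y)) = schurComplement D C B Ainv (T y) := by
        simp [solve_fst, solve_snd, schurComplement, hD' (C (S x))]
      _ = y := hT' y

end SchurComplement

section SequenceSpace

open Function

theorem leftInverse_of_apply_eq_mul {ι 𝕜 : Type*} [NormedRing 𝕜] {p : ℝ≥0∞} {a b : ι → 𝕜}
    (hba : ∀ n, b n * a n = 1) {M N : lp (fun _ : ι => 𝕜) p → lp (fun _ : ι => 𝕜) p}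
    (hM : ∀ f n, M f n = a n * f n) (hN : ∀ f n, N f n = b n * f n) : LeftInverse N M := by
  intro f
  ext n
  rw [hN, hM, ← mul_assoc, hba, one_mul]

variable {ι 𝕜 : Type*} [NormedField 𝕜] {p : ℝ≥0∞} [Fact (1 ≤ p)]

theorem coe_sub_smul_one_eq_signedBlock {lam : 𝕜} {a₁ a₂ : ι → 𝕜}
    {B C M₁ M₂ : lp (fun _ : ι => 𝕜) p →L[𝕜] lp (fun _ : ι => 𝕜) p}
    {H : lp (fun _ : ι => 𝕜) p × lp (fun _ : ι => 𝕜) p →L[𝕜]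
      lp (fun _ : ι => 𝕜) p × lp (fun _ : ι => 𝕜) p}
    (hM₁ : ∀ f n, M₁ f n = a₁ n * f n) (hM₂ : ∀ f n, M₂ f n = a₂ n * f n)
    (hH₁ : ∀ f n, (H f).1 n = (lam - a₁ n) * f.1 n + B f.2 n)
    (hH₂ : ∀ f n, (H f).2 n = C f.1 n + (lam - a₂ n) * f.2 n) :
    ⇑(H - lam • 1) = signedBlock M₁.toLinearMap B.toLinearMap C M₂ := by
  ext f n
  · change (H f).1 n - lam * f.1 n = B f.2 n - M₁ f.1 n
    rw [hH₁, hM₁]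
    ring
  · change (H f).2 n - lam * f.2 n = C f.1 n - M₂ f.2 n
    rw [hH₂, hM₂]
    ring

theorem dirac_resolvent_schur_general {lam : 𝕜} {a₁ a₂ : ι → 𝕜}
    (ha₁ : ∀ n, a₁ n ≠ 0) (ha₂ : ∀ n, a₂ n ≠ 0)
    {B C M₁ M₁inv M₂ M₂inv S₁ S₂ : lp (fun _ : ι => 𝕜) p →L[𝕜] lp (fun _ : ι => 𝕜) p}
    {H : lp (fun _ : ι => 𝕜) p × lp (fun _ : ι => 𝕜) p →L[𝕜]
      lp (fun _ : ι => 𝕜) p × lp (fun _ : ι => 𝕜) p}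
    (hM₁ : ∀ f n, M₁ f n = a₁ n * f n) (hM₁inv : ∀ f n, M₁inv f n = (a₁ n)⁻¹ * f n)
    (hM₂ : ∀ f n, M₂ f n = a₂ n * f n) (hM₂inv : ∀ f n, M₂inv f n = (a₂ n)⁻¹ * f n)
    (hH₁ : ∀ f n, (H f).1 n = (lam - a₁ n) * f.1 n + B f.2 n)
    (hH₂ : ∀ f n, (H f).2 n = C f.1 n + (lam - a₂ n) * f.2 n)
    (hS₁ : ∀ f, S₁ ((B ∘L M₂inv ∘L C - M₁) f) = f ∧ (B ∘L M₂inv ∘L C - M₁) (S₁ f) = f)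
    (hS₂ : ∀ f, S₂ ((C ∘L M₁inv ∘L B - M₂) f) = f ∧ (C ∘L M₁inv ∘L B - M₂) (S₂ f) = f) :
    (∀ f, (S₁ (((H - lam • 1) f).1 + B (M₂inv ((H - lam • 1) f).2)),
           S₂ (C (M₁inv ((H - lam • 1) f).1) + ((H - lam • 1) f).2)) = f) ∧
    (∀ g, (H - lam • 1) (S₁ (g.1 + B (M₂inv g.2)), S₂ (C (M₁inv g.1) + g.2)) = g) := by
  have hA : LeftInverse M₁inv M₁ :=
    leftInverse_of_apply_eq_mul (fun n => inv_mul_cancel₀ (ha₁ n)) hM₁ hM₁inv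
  have hA' : RightInverse M₁inv M₁ :=
    leftInverse_of_apply_eq_mul (fun n => mul_inv_cancel₀ (ha₁ n)) hM₁inv hM₁
  have hD : LeftInverse M₂inv M₂ :=
    leftInverse_of_apply_eq_mul (fun n => inv_mul_cancel₀ (ha₂ n)) hM₂ hM₂inv
  have hD' : RightInverse M₂inv M₂ :=
    leftInverse_of_apply_eq_mul (fun n => mul_inv_cancel₀ (ha₂ n)) hM₂inv hM₂
  have hS : LeftInverse S₁ (schurComplement M₁.toLinearMap B.toLinearMap C M₂inv) :=
    fun f => (hS₁ f).1
  have hS' : RightInverse S₁ (schurComplement M₁.toLinearMap B.toLinearMap C M₂inv) :=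
    fun f => (hS₁ f).2
  have hT : LeftInverse S₂ (schurComplement M₂.toLinearMap C.toLinearMap B M₁inv) :=
    fun f => (hS₂ f).1
  have hT' : RightInverse S₂ (schurComplement M₂.toLinearMap C.toLinearMap B M₁inv) :=
    fun f => (hS₂ f).2
  rw [coe_sub_smul_one_eq_signedBlock hM₁ hM₂ hH₁ hH₂]
  exact ⟨schurInverse_leftInverse_signedBlock hA hD hS hT,
    schurInverse_rightInverse_signedBlock hA hA' hD hD' hS hS' hT hT'⟩

end SequenceSpace

/- For `λ ∈ ℍ`, `H_{m,V,W} - λ` is invertible on `ℓ²(𝕏,ℂ²)` and its inverse is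
the block operator
`[[Δ₁⁻¹, Δ₁⁻¹ d̃ (λ+m-V₂)⁻¹], [Δ₂⁻¹ d̃* (λ-m-V₁)⁻¹, Δ₂⁻¹]]`,
both for `𝕏 = ℤ` and for `𝕏 = ℤ_k` (modeled on `ℕ` via `j ↔ k + j`).
`ℓ²(𝕏,ℂ²)` is modeled as the product of two copies of `ℓ²(𝕏,ℂ)`, `H` is the
block operator `[[m+V₁, d̃],[d̃*, -m+V₂]]` characterized by its pointwise
action, `Δ₁ = d̃ M₂inv d̃* - M₁` and `Δ₂ = d̃* M₁inv d̃ - M₂` are the (invertible)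
Laplacian-like operators, and `S₁, S₂` denote their inverses. The conclusion
states that the displayed block operator is a two-sided inverse of `H - λ`. -/
theorem dirac_resolvent_schur (m : ℝ) (hm : 0 ≤ m) (lam : ℂ) (hlam : 0 < lam.im) :
    (∀ (V₁ V₂ : ℤ → ℝ) (W₁ W₂ : ℤ → ℂ),
      Memℓp V₁ ∞ → Memℓp V₂ ∞ → Memℓp W₁ ∞ → Memℓp W₂ ∞ →
      ∀ dtil dtilStar M1 M1inv M2 M2inv S₁ S₂ :
          lp (fun _ : ℤ => ℂ) 2 →L[ℂ] lp (fun _ : ℤ => ℂ) 2,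
      ∀ H : lp (fun _ : ℤ => ℂ) 2 × lp (fun _ : ℤ => ℂ) 2 →L[ℂ]
          lp (fun _ : ℤ => ℂ) 2 × lp (fun _ : ℤ => ℂ) 2,
        (∀ (f : lp (fun _ : ℤ => ℂ) 2) (n : ℤ),
          dtil f n = (1 + W₁ n) * f n + (-1 + W₂ n) * f (n + 1)) →
        (∀ (f : lp (fun _ : ℤ => ℂ) 2) (n : ℤ),
          dtilStar f n = (1 + conj (W₁ n)) * f n - (1 - conj (W₂ (n - 1))) * f (n - 1)) →
        (∀ (f : lp (fun _ : ℤ => ℂ) 2) (n : ℤ), M1 f n = (lam - m - V₁ n) * f n) →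
        (∀ (f : lp (fun _ : ℤ => ℂ) 2) (n : ℤ), M1inv f n = (lam - m - V₁ n)⁻¹ * f n) →
        (∀ (f : lp (fun _ : ℤ => ℂ) 2) (n : ℤ), M2 f n = (lam + m - V₂ n) * f n) →
        (∀ (f : lp (fun _ : ℤ => ℂ) 2) (n : ℤ), M2inv f n = (lam + m - V₂ n)⁻¹ * f n) →
        (∀ (f : lp (fun _ : ℤ => ℂ) 2 × lp (fun _ : ℤ => ℂ) 2) (n : ℤ),
          (H f).1 n = (m + V₁ n) * f.1 n +
            ((1 + W₁ n) * f.2 n + (-1 + W₂ n) * f.2 (n + 1))) →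
        (∀ (f : lp (fun _ : ℤ => ℂ) 2 × lp (fun _ : ℤ => ℂ) 2) (n : ℤ),
          (H f).2 n = ((1 + conj (W₁ n)) * f.1 n - (1 - conj (W₂ (n - 1))) * f.1 (n - 1)) +
            (-m + V₂ n) * f.2 n) →
        (∀ f, S₁ ((dtil ∘L M2inv ∘L dtilStar - M1) f) = f ∧
          (dtil ∘L M2inv ∘L dtilStar - M1) (S₁ f) = f) →
        (∀ f, S₂ ((dtilStar ∘L M1inv ∘L dtil - M2) f) = f ∧
          (dtilStar ∘L M1inv ∘L dtil - M2) (S₂ f) = f) →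
        (∀ f, (S₁ (((H - lam • 1) f).1 + dtil (M2inv (((H - lam • 1) f).2))),
               S₂ (dtilStar (M1inv (((H - lam • 1) f).1)) + ((H - lam • 1) f).2)) = f) ∧
        (∀ g, (H - lam • 1) (S₁ (g.1 + dtil (M2inv g.2)),
               S₂ (dtilStar (M1inv g.1) + g.2)) = g)) ∧
    (∀ (k : ℤ) (V₁ V₂ : ℤ → ℝ) (W₁ W₂ : ℤ → ℂ),
      Memℓp V₁ ∞ → Memℓp V₂ ∞ → Memℓp W₁ ∞ → Memℓp W₂ ∞ →
      ∀ dtil dtilStar M1 M1inv M2 M2inv S₁ S₂ :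
          lp (fun _ : ℕ => ℂ) 2 →L[ℂ] lp (fun _ : ℕ => ℂ) 2,
      ∀ H : lp (fun _ : ℕ => ℂ) 2 × lp (fun _ : ℕ => ℂ) 2 →L[ℂ]
          lp (fun _ : ℕ => ℂ) 2 × lp (fun _ : ℕ => ℂ) 2,
        (∀ (f : lp (fun _ : ℕ => ℂ) 2) (j : ℕ),
          dtil f j = (1 + W₁ (k + j)) * f j + (-1 + W₂ (k + j)) * f (j + 1)) →
        (∀ f : lp (fun _ : ℕ => ℂ) 2, dtilStar f 0 = (1 + conj (W₁ k)) * f 0) →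
        (∀ (f : lp (fun _ : ℕ => ℂ) 2) (j : ℕ),
          dtilStar f (j + 1) =
            (1 + conj (W₁ (k + j + 1))) * f (j + 1) - (1 - conj (W₂ (k + j))) * f j) →
        (∀ (f : lp (fun _ : ℕ => ℂ) 2) (j : ℕ), M1 f j = (lam - m - V₁ (k + j)) * f j) →
        (∀ (f : lp (fun _ : ℕ => ℂ) 2) (j : ℕ), M1inv f j = (lam - m - V₁ (k + j))⁻¹ * f j) →
        (∀ (f : lp (fun _ : ℕ => ℂ) 2) (j : ℕ), M2 f j = (lam + m - V₂ (k + j)) * f j) →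
        (∀ (f : lp (fun _ : ℕ => ℂ) 2) (j : ℕ), M2inv f j = (lam + m - V₂ (k + j))⁻¹ * f j) →
        (∀ (f : lp (fun _ : ℕ => ℂ) 2 × lp (fun _ : ℕ => ℂ) 2) (j : ℕ),
          (H f).1 j = (m + V₁ (k + j)) * f.1 j +
            ((1 + W₁ (k + j)) * f.2 j + (-1 + W₂ (k + j)) * f.2 (j + 1))) →
        (∀ f : lp (fun _ : ℕ => ℂ) 2 × lp (fun _ : ℕ => ℂ) 2,
          (H f).2 0 = (1 + conj (W₁ k)) * f.1 0 + (-m + V₂ k) * f.2 0) →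
        (∀ (f : lp (fun _ : ℕ => ℂ) 2 × lp (fun _ : ℕ => ℂ) 2) (j : ℕ),
          (H f).2 (j + 1) =
            ((1 + conj (W₁ (k + j + 1))) * f.1 (j + 1) - (1 - conj (W₂ (k + j))) * f.1 j) +
            (-m + V₂ (k + j + 1)) * f.2 (j + 1)) →
        (∀ f, S₁ ((dtil ∘L M2inv ∘L dtilStar - M1) f) = f ∧
          (dtil ∘L M2inv ∘L dtilStar - M1) (S₁ f) = f) →
        (∀ f, S₂ ((dtilStar ∘L M1inv ∘L dtil - M2) f) = f ∧
          (dtilStar ∘L M1inv ∘L dtil - M2) (S₂ f) = f) →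
        (∀ f, (S₁ (((H - lam • 1) f).1 + dtil (M2inv (((H - lam • 1) f).2))),
               S₂ (dtilStar (M1inv (((H - lam • 1) f).1)) + ((H - lam • 1) f).2)) = f) ∧
        (∀ g, (H - lam • 1) (S₁ (g.1 + dtil (M2inv g.2)),
               S₂ (dtilStar (M1inv g.1) + g.2)) = g)) := by
  have ne₁ (v : ℝ) : lam - m - v ≠ 0 :=
    sub_ne_zero.2 (UpperHalfPlane.ne_ofReal ⟨lam - m, by simpa using hlam⟩ v)
  have ne₂ (v : ℝ) : lam + m - v ≠ 0 :=
    sub_ne_zero.2 (UpperHalfPlane.ne_ofReal ⟨lam + m, by simpa using hlam⟩ v)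
  constructor
  · intro V₁ V₂ W₁ W₂ _ _ _ _ D D' M1 M1inv M2 M2inv S₁ S₂ H hD hD' hM1 hM1i hM2 hM2i hH₁ hH₂
    refine dirac_resolvent_schur_general (fun n => ne₁ (V₁ n)) (fun n => ne₂ (V₂ n))
      hM1 hM1i hM2 hM2i (fun f n => ?_) (fun f n => ?_)
    · rw [hH₁, hD]; ring
    · rw [hH₂, hD']; ring
  · intro k V₁ V₂ W₁ W₂ _ _ _ _ D D' M1 M1inv M2 M2inv S₁ S₂ H hD hD'₀ hD' hM1 hM1i hM2 hM2i
      hH₁ hH₂₀ hH₂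
    refine dirac_resolvent_schur_general (fun j : ℕ => ne₁ (V₁ (k + j)))
      (fun j => ne₂ (V₂ (k + j))) hM1 hM1i hM2 hM2i (fun f j => ?_) (fun f j => ?_)
    · rw [hH₁, hD]; ring
    · cases j with
      | zero => rw [hH₂₀, hD'₀, Nat.cast_zero, add_zero]; ring
      | succ j => rw [hH₂, hD', Nat.cast_succ, ← add_assoc]; ring

end
end

section
/- Let λ ∈ ℍ, V = (V₁,V₂)ᵗ ∈ ℓ^∞(ℤ₊,ℝ²) and W = (W₁,W₂)ᵗ ∈ ℓ^∞(ℤ₊,ℂ²). Then for every n ∈ ℤ₊ the truncated operator Δ^{(n)}_{λ,V,W} on ℓ²(ℤ_n,ℂ) is invertible (bijective with bounded inverse). -/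
noncomputable section
open scoped ENNReal ComplexConjugate

/-!
Comparing matrix entries shows that the operator written `d̃*` really is the adjoint `D*` of
`D = d̃`, so the quadratic form of `Δ = D* A D - B` has imaginary part
`Im ⟪D f, A (D f)⟫ - Im ⟪f, B f⟫`. When `V₁` and `V₂` have nonpositive imaginary part, the weights
of `A` are inverses of numbers in the upper half-plane, hence have nonpositive imaginary part, and
those of `B` have imaginary part at least `Im λ`. Thus `Im ⟪f, Δ f⟫ ≤ -Im λ * ‖f‖²`, so `-Δ` is
coercive and therefore invertible.
-/

open scoped lp
open ContinuousLinearMap (adjoint adjoint_inner_right)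

section Coercive

variable {H K : Type*} [NormedAddCommGroup H] [InnerProductSpace ℂ H] [CompleteSpace H]
  [NormedAddCommGroup K] [InnerProductSpace ℂ K] [CompleteSpace K]

theorem isUnit_of_forall_le_im_inner_map {T : H →L[ℂ] H} {c : ℝ} (hc : 0 < c)
    (hT : ∀ x, c * ‖x‖ ^ 2 ≤ (inner ℂ x (T x)).im) : IsUnit T := by
  refine T.isUnit_of_forall_le_norm_inner_map (c := ⟨c, hc.le⟩) hc fun x => ?_
  calc ‖x‖ ^ 2 * c = c * ‖x‖ ^ 2 := mul_comm _ _
    _ ≤ (inner ℂ x (T x)).im := hT x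
    _ ≤ ‖inner ℂ x (T x)‖ := (le_abs_self _).trans (Complex.abs_im_le_norm _)
    _ = ‖inner ℂ (T x) x‖ := norm_inner_symm _ _

theorem isUnit_adjoint_comp_comp_sub (D : H →L[ℂ] K) {A : K →L[ℂ] K} {B : H →L[ℂ] H} {c : ℝ}
    (hc : 0 < c) (hA : ∀ y, (inner ℂ y (A y)).im ≤ 0)
    (hB : ∀ x, c * ‖x‖ ^ 2 ≤ (inner ℂ x (B x)).im) :
    IsUnit (adjoint D ∘L A ∘L D - B) := by
  rw [← IsUnit.neg_iff, neg_sub]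
  refine isUnit_of_forall_le_im_inner_map hc fun x => ?_
  have him : (inner ℂ x ((B - adjoint D ∘L A ∘L D) x)).im =
      (inner ℂ x (B x)).im - (inner ℂ (D x) (A (D x))).im := by
    simp [adjoint_inner_right]
  linarith [hA (D x), hB x]

end Coercive

section PointwiseSMul

variable {ι 𝕜 : Type*} [RCLike 𝕜] {G : ι → Type*} [∀ i, NormedAddCommGroup (G i)]

theorem hasSum_norm_sq_apply (f : lp G 2) : HasSum (fun i => ‖f i‖ ^ 2) (‖f‖ ^ 2) := by
  simpa using lp.hasSum_norm (p := 2) (by simp) f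

theorem hasSum_inner_of_eq_smul [∀ i, InnerProductSpace 𝕜 (G i)] {w : ι → 𝕜} {f g : lp G 2}
    (hg : ∀ i, g i = w i • f i) :
    HasSum (fun i => w i * (‖f i‖ : 𝕜) ^ 2) (inner 𝕜 f g) := by
  simpa [hg, inner_smul_right, inner_self_eq_norm_sq_to_K] using lp.hasSum_inner (𝕜 := 𝕜) f g

variable [∀ i, InnerProductSpace ℂ (G i)] {w : ι → ℂ} {f g : lp G 2}

theorem hasSum_im_inner_of_eq_smul (hg : ∀ i, g i = w i • f i) :
    HasSum (fun i => (w i).im * ‖f i‖ ^ 2) (inner ℂ f g).im := by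
  simpa [← Complex.ofReal_pow] using Complex.hasSum_im (hasSum_inner_of_eq_smul hg)

theorem le_im_inner_of_eq_smul {c : ℝ} (hg : ∀ i, g i = w i • f i) (hw : ∀ i, c ≤ (w i).im) :
    c * ‖f‖ ^ 2 ≤ (inner ℂ f g).im :=
  hasSum_le (fun i => by gcongr; exact hw i) ((hasSum_norm_sq_apply f).mul_left c)
    (hasSum_im_inner_of_eq_smul hg)

theorem im_inner_nonpos_of_eq_smul (hg : ∀ i, g i = w i • f i) (hw : ∀ i, (w i).im ≤ 0) :
    (inner ℂ f g).im ≤ 0 :=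
  (hasSum_im_inner_of_eq_smul hg).nonpos fun i =>
    mul_nonpos_of_nonpos_of_nonneg (hw i) (sq_nonneg _)

end PointwiseSMul

section Adjoint

variable {𝕜 : Type*} [RCLike 𝕜]

theorem eq_adjoint_of_apply_single {ι κ : Type*} [DecidableEq ι] [DecidableEq κ]
    {D : ℓ²(ι, 𝕜) →L[𝕜] ℓ²(κ, 𝕜)} {E : ℓ²(κ, 𝕜) →L[𝕜] ℓ²(ι, 𝕜)}
    (h : ∀ i k, E (lp.single 2 k 1) i = conj (D (lp.single 2 i 1) k)) : E = adjoint D := by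
  refine lp.ext_continuousLinearMap (by simp) fun k => ?_
  ext i
  calc E (lp.single 2 k 1) i = inner 𝕜 (D (lp.single 2 i 1)) (lp.single 2 k 1) := by
        simp [h, lp.inner_single_right]
    _ = inner 𝕜 (lp.single 2 i 1) (adjoint D (lp.single 2 k 1)) := (adjoint_inner_right D _ _).symm
    _ = adjoint D (lp.single 2 k 1) i := by simp [lp.inner_single_left]

theorem eq_adjoint_of_bidiagonal {a b : ℕ → 𝕜} {D E : ℓ²(ℕ, 𝕜) →L[𝕜] ℓ²(ℕ, 𝕜)}
    (hD : ∀ f j, D f j = a j * f j + b j * f (j + 1))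
    (hE_zero : ∀ f, E f 0 = conj (a 0) * f 0)
    (hE_succ : ∀ f j, E f (j + 1) = conj (a (j + 1)) * f (j + 1) + conj (b j) * f j) :
    E = adjoint D := by
  refine eq_adjoint_of_apply_single fun i k => ?_
  rcases i with _ | i
  · rcases eq_or_ne k 0 with rfl | hk
    · simp [hD, hE_zero]
    · simp [hD, hE_zero, hk, hk.symm]
  · rcases eq_or_ne k (i + 1) with rfl | hk
    · simp [hD, hE_succ]
    · rcases eq_or_ne k i with rfl | hki
      · simp [hD, hE_succ]
      · simp [hD, hE_succ, hk, hk.symm, hki, hki.symm]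

end Adjoint

theorem truncated_delta_invertible_general (m : ℝ) (lam : ℂ) (hlam : 0 < lam.im)
    (V₁ V₂ W₁ W₂ : ℕ → ℂ) (hV₁ : ∀ k, (V₁ k).im ≤ 0) (hV₂ : ∀ k, (V₂ k).im ≤ 0) (n : ℕ)
    (dtil dtilStar M1inv M2 : ℓ²(ℕ, ℂ) →L[ℂ] ℓ²(ℕ, ℂ))
    (hdtil : ∀ f j,
      dtil f j = (1 + W₁ (n + j)) * f j + (-1 + W₂ (n + j)) * f (j + 1))
    (hdtilStar0 : ∀ f, dtilStar f 0 = (1 + conj (W₁ n)) * f 0)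
    (hdtilStar : ∀ f j, dtilStar f (j + 1) =
      (1 + conj (W₁ (n + j + 1))) * f (j + 1) - (1 - conj (W₂ (n + j))) * f j)
    (hM1inv : ∀ f j, M1inv f j = (lam - m - V₁ (n + j))⁻¹ * f j)
    (hM2 : ∀ f j, M2 f j = (lam + m - V₂ (n + j)) * f j) :
    IsUnit (dtilStar ∘L M1inv ∘L dtil - M2) := by
  have hadj : dtilStar = adjoint dtil := by
    refine eq_adjoint_of_bidiagonal hdtil (fun f => by simp [hdtilStar0]) fun f j => ?_
    simp only [hdtilStar, map_add, map_neg, map_one, add_assoc]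
    ring
  have hM1inv_im (j : ℕ) : (lam - m - V₁ (n + j))⁻¹.im ≤ 0 := by
    have him : 0 ≤ (lam - m - V₁ (n + j)).im := by
      simpa using (hV₁ (n + j)).trans hlam.le
    rw [Complex.inv_im]
    exact div_nonpos_of_nonpos_of_nonneg (neg_nonpos.2 him) (Complex.normSq_nonneg _)
  have hM2_im (j : ℕ) : lam.im ≤ (lam + m - V₂ (n + j)).im := by
    simpa using hV₂ (n + j)
  rw [hadj]
  exact isUnit_adjoint_comp_comp_sub dtil hlam
    (fun g => im_inner_nonpos_of_eq_smul (hM1inv g) hM1inv_im)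
    fun f => le_im_inner_of_eq_smul (hM2 f) hM2_im

/- For `λ ∈ ℍ` and bounded potentials `V, W` on `ℤ₊`, the truncated operator
`Δ^{(n)}_{λ,V,W} = d̃* (λ-m-V₁|_{ℤ_n})⁻¹ d̃ - (λ+m-V₂|_{ℤ_n})` on `ℓ²(ℤ_n,ℂ)`
is invertible with bounded inverse, for every `n ∈ ℤ₊`. Here `ℓ²(ℤ_n,ℂ)` is
modeled on `ℓ²(ℕ,ℂ)` via the identification `j ↔ n + j`, and the operators are
characterized by their pointwise action (with boundary convention at `j = 0`). -/
theorem truncated_delta_invertible (m : ℝ) (hm : 0 ≤ m) (lam : ℂ) (hlam : 0 < lam.im)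
    (V₁ V₂ : ℕ → ℝ) (W₁ W₂ : ℕ → ℂ)
    (hV₁ : Memℓp V₁ ∞) (hV₂ : Memℓp V₂ ∞) (hW₁ : Memℓp W₁ ∞) (hW₂ : Memℓp W₂ ∞)
    (n : ℕ)
    (dtil dtilStar M1inv M2 : lp (fun _ : ℕ => ℂ) 2 →L[ℂ] lp (fun _ : ℕ => ℂ) 2)
    (hdtil : ∀ (f : lp (fun _ : ℕ => ℂ) 2) (j : ℕ),
      dtil f j = (1 + W₁ (n + j)) * f j + (-1 + W₂ (n + j)) * f (j + 1))
    (hdtilStar0 : ∀ f : lp (fun _ : ℕ => ℂ) 2, dtilStar f 0 = (1 + conj (W₁ n)) * f 0)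
    (hdtilStar : ∀ (f : lp (fun _ : ℕ => ℂ) 2) (j : ℕ),
      dtilStar f (j + 1) =
        (1 + conj (W₁ (n + j + 1))) * f (j + 1) - (1 - conj (W₂ (n + j))) * f j)
    (hM1inv : ∀ (f : lp (fun _ : ℕ => ℂ) 2) (j : ℕ),
      M1inv f j = (lam - m - V₁ (n + j))⁻¹ * f j)
    (hM2 : ∀ (f : lp (fun _ : ℕ => ℂ) 2) (j : ℕ),
      M2 f j = (lam + m - V₂ (n + j)) * f j) :
    IsUnit (dtilStar ∘L M1inv ∘L dtil - M2) := by
  exact truncated_delta_invertible_general m lam hlam (V₁ ·) (V₂ ·) W₁ W₂ (by simp) (by simp) n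
    dtil dtilStar M1inv M2 hdtil hdtilStar0 hdtilStar hM1inv hM2

end
end
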